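/- For every integer k ≥ 2 there exists a set A ⊂ ℝ² of 2k points in general position whose convex hull is two-dimensional and whose number of triangulations is exactly binom(2k−2, k−1) · (C_{k−2})², where C_m denotes the m-th Catalan number. (Such a set is realized by a 'double chain': two convex chains of k points each, facing one another, so that every pair of segments in different chains are mutually visible.) -/

import Mathlib

/-! The set `A` is the double chain `dchain k`, made of the points `(i, ε (k² + i²))` for `i < k` and
`ε = ± 1`. Each chain is convex towards the other one, and lies on one side of every line through
two points of the other.

A triangulation `T` of the double chain falls into three parts: the triangles in the convex polygon
spanned by the upper chain, those in the polygon spanned by the lower chain, and those between the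
chains. A triangle with a side on one chain and its apex on the other has two consecutive points as
its side (`IsTriangulation.step_eq`), for otherwise it would contain a further point of that chain.
So, read from left to right, each triangle between the chains advances one of the two ends of an
edge between the chains by one point, and these triangles form a monotone lattice path from `(0, 0)` to
`(k - 1, k - 1)`. There are `(2 * k - 2).choose (k - 1)` such paths (`card_latticePath`) and
`catalan (k - 2)` triangulations of each polygon (`card_polyTri`). It remains to show that `T` gives
such a triple, is determined by it (`eq_of_encoding`), and can be prescribed by it
(`exists_of_codes`).

For the first of these, only local properties of a triangulation are used: an edge bounds a triangle
on each side on which there are points (`IsTriangulation.exists_triangle_edge`), and only one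
(`triangle_side_unique`). The resulting local conditions on sets of index triples
(`IsTriangulation.goodPoly`) and of lattice steps (`IsTriangulation.goodPath`) imply, by induction,
that these are triangulations of a polygon and lattice paths in the recursive sense
(`GoodPoly.mem_polyTri`, `GoodPath.mem_latticePath`).

For the last, let `p` be a point of the hull that is on no line through two points of `A`, and on no
vertical line through a point of `A`. The indicator of a triangle at `p` is the winding number around
`p` of its boundary (`wind_triangle`). Summed over all prescribed triangles, the inner edges cancel,
and what remains is the winding number of the boundary of the convex hull, which is a quadrilateral;
it is `1` (`wind_quadrilateral`). So the triangles cover each such `p` exactly once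
(`sum_ind_codes`). As such points are dense, the triangles cover the hull and have disjoint
interiors, and by general position a line separating two of them contains at most two of their
vertices, so that they meet in a common face (`InGeneralPosition.exists_triangulation`).
-/

open Geometry

/-- The Euclidean plane `ℝ²`. -/
abbrev Plane : Type := EuclideanSpace ℝ (Fin 2)

/-- A triangulation of a finite point set `A ⊆ ℝ²` (whose convex hull is two-dimensional):
a geometric simplicial complex all of whose faces have at most 3 elements, whose underlying
space is the convex hull of `A`, and whose vertex set is exactly `A`. -/
def IsTriangulation (A : Finset Plane) (T : SimplicialComplex ℝ Plane) : Prop :=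
  (∀ s ∈ T.faces, s.card ≤ 3) ∧
  T.space = convexHull ℝ (A : Set Plane) ∧
  T.vertices = (A : Set Plane)

/-- A finite point set is in general position if no three of its points are collinear. -/
def InGeneralPosition (A : Finset Plane) : Prop :=
  ∀ x ∈ A, ∀ y ∈ A, ∀ z ∈ A, x ≠ y → y ≠ z → x ≠ z →
    ¬ Collinear ℝ ({x, y, z} : Set Plane)

/-! ### Orientation and triangles in the plane -/

/-- Twice the signed area of the triangle `a b c`; positive when it is counterclockwise. -/
def orient (a b c : Plane) : ℝ := (b 0 - a 0) * (c 1 - a 1) - (b 1 - a 1) * (c 0 - a 0)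

/-- The linear part of `orient a b`, as a function of the third vertex. -/
noncomputable def orientLin (a b : Plane) : Plane →ₗ[ℝ] ℝ :=
  (b 0 - a 0) • (EuclideanSpace.proj (1 : Fin 2) : Plane →L[ℝ] ℝ).toLinearMap
    - (b 1 - a 1) • (EuclideanSpace.proj (0 : Fin 2) : Plane →L[ℝ] ℝ).toLinearMap

lemma orient_eq_lin (a b c : Plane) : orient a b c = orientLin a b c - orientLin a b a := by
  simp [orient, orientLin]; ring

lemma orient_self_right (a b : Plane) : orient a b b = 0 := by simp [orient]; ring
lemma orient_self_left (a b : Plane) : orient a b a = 0 := by simp [orient]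
lemma orient_rotate (a b c : Plane) : orient b c a = orient a b c := by simp [orient]; ring
lemma orient_swap (a b c : Plane) : orient b a c = - orient a b c := by simp [orient]; ring

lemma orient_lineMap (a b q d : Plane) (t : ℝ) :
    orient a b (AffineMap.lineMap q d t) = (1 - t) * orient a b q + t * orient a b d := by
  simp [orient, AffineMap.lineMap_apply]; ring

lemma orient_midpoint (a b : Plane) : orient a b (midpoint ℝ a b) = 0 := by
  rw [midpoint, orient_lineMap, orient_self_right, orient_self_left]; simp

lemma continuous_orient (a b : Plane) : Continuous (orient a b) := by
  unfold orient; fun_prop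

lemma le_of_mem_convexHull (f : Plane →ₗ[ℝ] ℝ) {s : Set Plane} {u : ℝ}
    (h : ∀ y ∈ s, f y ≤ u) {x : Plane} (hx : x ∈ convexHull ℝ s) : f x ≤ u :=
  convexHull_min (t := {y | f y ≤ u}) h (convex_halfSpace_le f.isLinear u) hx

lemma orient_nonneg_of_mem_convexHull {a b x : Plane} {s : Set Plane} (σ : ℝ)
    (h : ∀ y ∈ s, 0 ≤ σ * orient a b y) (hx : x ∈ convexHull ℝ s) : 0 ≤ σ * orient a b x := by
  have := le_of_mem_convexHull (-(σ • orientLin a b)) (u := -(σ * orientLin a b a))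
    (s := s) (fun y hy => by have := h y hy; rw [orient_eq_lin] at this; simp; linarith) hx
  rw [orient_eq_lin]; simp at this; linarith

/-- The points of a convex hull at which a linear functional attains its maximum lie in the
convex hull of the generators that attain it. -/
lemma mem_convexHull_of_max (f : Plane →ₗ[ℝ] ℝ) {s : Finset Plane} {u : ℝ}
    (h : ∀ y ∈ s, f y ≤ u) {x : Plane} (hx : x ∈ convexHull ℝ (s : Set Plane)) (hxu : f x = u) :
    x ∈ convexHull ℝ ((s.filter (fun y => f y = u) : Finset Plane) : Set Plane) := by
  classical
  rw [Finset.mem_convexHull'] at hx ⊢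
  obtain ⟨w, hw0, hw1, hwx⟩ := hx
  have hz : ∀ y ∈ s, w y * (u - f y) = 0 := by
    refine (Finset.sum_eq_zero_iff_of_nonneg fun y hy =>
      mul_nonneg (hw0 y hy) (sub_nonneg.2 (h y hy))).1 ?_
    have : f x = ∑ y ∈ s, w y * f y := by rw [← hwx]; simp
    simp only [mul_sub, Finset.sum_sub_distrib, ← Finset.sum_mul, hw1, ← this, hxu]; ring
  have hz' : ∀ y ∈ s, ¬ f y = u → w y = 0 := fun y hy hne =>
    (mul_eq_zero.1 (hz y hy)).resolve_right fun h' => hne (by linarith)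
  refine ⟨w, fun y hy => hw0 y (Finset.mem_filter.1 hy).1, ?_, ?_⟩
  · rw [Finset.sum_filter_of_ne, hw1]
    intro y hy hne; by_contra h'; exact hne (hz' y hy h')
  · rw [Finset.sum_filter_of_ne, hwx]
    intro y hy hne; by_contra h'; exact hne (by rw [hz' y hy h', zero_smul])

/-- Barycentric criterion for membership in a triangle. -/
lemma mem_triangle {a b c p : Plane} (h1 : 0 ≤ orient p a b) (h2 : 0 ≤ orient p b c)
    (h3 : 0 ≤ orient p c a) (h : 0 < orient a b c) :
    p ∈ convexHull ℝ ({a, b, c} : Set Plane) := by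
  have hs : orient p a b + orient p b c + orient p c a = orient a b c := by simp [orient]; ring
  have hp : p = (orient p b c / orient a b c) • a + (orient p c a / orient a b c) • b
      + (orient p a b / orient a b c) • c := by
    have hne := h.ne'
    ext i
    fin_cases i <;> simp <;> field_simp <;> simp only [orient] <;> ring
  rw [hp]
  have hc := convex_convexHull ℝ ({a, b, c} : Set Plane)
  have ha : a ∈ convexHull ℝ ({a, b, c} : Set Plane) := subset_convexHull ℝ _ (by simp)
  have hb : b ∈ convexHull ℝ ({a, b, c} : Set Plane) := subset_convexHull ℝ _ (by simp)
  have hcc : c ∈ convexHull ℝ ({a, b, c} : Set Plane) := subset_convexHull ℝ _ (by simp)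
  have := hc.sum_mem (t := Finset.univ)
    (w := ![orient p b c / orient a b c, orient p c a / orient a b c, orient p a b / orient a b c])
    (z := ![a, b, c])
    (by intro i _; fin_cases i <;> simp <;> positivity)
    (by simp [Fin.sum_univ_three]; rw [← add_div, ← add_div, div_eq_one_iff_eq h.ne']; linarith)
    (by intro i _; fin_cases i <;> simp [ha, hb, hcc])
  simpa [Fin.sum_univ_three] using this

lemma orient_eq_zero_iff_collinear {a b c : Plane} (hab : a ≠ b) :
    orient a b c = 0 ↔ Collinear ℝ ({a, b, c} : Set Plane) := by
  constructor
  · intro h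
    rw [collinear_iff_of_mem (p₀ := a) (by simp)]
    refine ⟨b - a, ?_⟩
    have hne : b 0 - a 0 ≠ 0 ∨ b 1 - a 1 ≠ 0 := by
      by_contra! h'
      apply hab; ext i; fin_cases i <;> simp <;> linarith [h'.1, h'.2]
    simp only [Set.mem_insert_iff, Set.mem_singleton_iff, forall_eq_or_imp, forall_eq]
    refine ⟨⟨0, by simp⟩, ⟨1, by simp⟩, ?_⟩
    rw [orient] at h
    rcases hne with h0 | h0
    · refine ⟨(c 0 - a 0) / (b 0 - a 0), ?_⟩
      ext i; fin_cases i <;> simp <;> field_simp <;> linarith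
    · refine ⟨(c 1 - a 1) / (b 1 - a 1), ?_⟩
      ext i; fin_cases i <;> simp <;> field_simp <;> linarith
  · intro h
    rw [collinear_iff_of_mem (p₀ := a) (by simp)] at h
    obtain ⟨v, hv⟩ := h
    obtain ⟨r, hr⟩ := hv b (by simp)
    obtain ⟨s, hs⟩ := hv c (by simp)
    rw [hr, hs]; simp [orient]; ring

/-! ### Local structure of a triangulation -/

section FromTriangulation

variable {A : Finset Plane} {T : SimplicialComplex ℝ Plane}

lemma IsTriangulation.face_subset (hT : IsTriangulation A T) {s : Finset Plane}
    (hs : s ∈ T.faces) : s ⊆ A := by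
  intro x hx
  have : x ∈ T.vertices := by
    rw [SimplicialComplex.vertices_eq]; exact Set.mem_biUnion hs hx
  rw [hT.2.2] at this; exact this

lemma IsTriangulation.finite_faces (hT : IsTriangulation A T) : T.faces.Finite :=
  (Finset.finite_toSet A.powerset).subset fun s hs => by
    simpa using hT.face_subset hs

/-- Just beside a point `q` of the hull, in the direction of any vertex `d`, there are points of
a face that contains `q`: the finitely many faces missing `q` stay away from it. -/
lemma IsTriangulation.exists_face_near (hT : IsTriangulation A T) {q d : Plane}
    (hq : q ∈ convexHull ℝ (A : Set Plane)) (hd : d ∈ A) :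
    ∃ t ∈ T.faces, q ∈ convexHull ℝ (t : Set Plane) ∧
      ∃ ε : ℝ, 0 < ε ∧ ε ≤ 1 ∧ AffineMap.lineMap q d ε ∈ convexHull ℝ (t : Set Plane) := by
  classical
  set C : Set Plane := ⋃ t ∈ {t ∈ T.faces | q ∉ convexHull ℝ (t : Set Plane)},
    convexHull ℝ (t : Set Plane) with hC
  have hCc : IsClosed C := by
    refine Set.Finite.isClosed_biUnion (hT.finite_faces.subset fun t ht => ht.1) ?_
    intro t _
    exact (Finset.finite_toSet t).isClosed_convexHull ℝ
  have hqC : q ∉ C := by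
    simp only [hC, Set.mem_iUnion, not_exists]
    intro t ht h; exact ht.2 h
  have hcont : Filter.Tendsto (fun ε : ℝ => (AffineMap.lineMap q d ε : Plane))
      (nhdsWithin 0 (Set.Ioi 0)) (nhds q) := by
    have : Continuous (fun ε : ℝ => (AffineMap.lineMap q d ε : Plane)) :=
      AffineMap.lineMap_continuous
    have h0 := this.tendsto 0
    simp only [AffineMap.lineMap_apply_zero] at h0
    exact h0.mono_left nhdsWithin_le_nhds
  have h1 := hcont.eventually (hCc.isOpen_compl.mem_nhds hqC)
  have h2 : ∀ᶠ ε : ℝ in nhdsWithin 0 (Set.Ioi 0), ε ∈ Set.Ioc (0 : ℝ) 1 :=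
    Ioc_mem_nhdsGT one_pos
  obtain ⟨ε, hε1, hε2⟩ := (h1.and h2).exists
  have hmem : (AffineMap.lineMap q d ε : Plane) ∈ T.space := by
    rw [hT.2.1]
    exact (convex_convexHull ℝ _).lineMap_mem hq (subset_convexHull ℝ _ hd)
      ⟨hε2.1.le, hε2.2⟩
  obtain ⟨t, ht, hmt⟩ := SimplicialComplex.mem_space_iff.1 hmem
  refine ⟨t, ht, ?_, ε, hε2.1, hε2.2, hmt⟩
  by_contra hqt
  exact hε1 (Set.mem_biUnion (show t ∈ {t ∈ T.faces | q ∉ convexHull ℝ (t : Set Plane)} from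
    ⟨ht, hqt⟩) hmt)

/-- If the midpoint of `a b` lies in the hull of the endpoints that belong to `t`, then both do. -/
lemma eq_of_midpoint_mem {a b : Plane} {t : Finset Plane} [DecidableEq Plane]
    (h : midpoint ℝ a b ∈ convexHull ℝ ((t ∩ {a, b} : Finset Plane) : Set Plane)) :
    a ∈ t ∧ b ∈ t := by
  by_cases hab : a = b
  · subst hab
    have : (t ∩ {a, a}).Nonempty := by
      rw [Finset.nonempty_iff_ne_empty]; rintro h0; rw [h0] at h; simp at h
    obtain ⟨x, hx⟩ := this
    simp at hx; rw [← hx.2]; exact ⟨hx.1, hx.1⟩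
  constructor
  · by_contra ha
    have : ((t ∩ {a, b} : Finset Plane) : Set Plane) ⊆ {b} := by
      intro x hx; simp at hx ⊢; rcases hx.2 with rfl | rfl
      · exact absurd hx.1 ha
      · rfl
    have h' := convexHull_mono this h
    rw [convexHull_singleton, Set.mem_singleton_iff, midpoint_eq_right_iff] at h'
    exact hab h'
  · by_contra hb
    have : ((t ∩ {a, b} : Finset Plane) : Set Plane) ⊆ {a} := by
      intro x hx; simp at hx ⊢; rcases hx.2 with rfl | rfl
      · rfl
      · exact absurd hx.1 hb
    have h' := convexHull_mono this h
    rw [convexHull_singleton, Set.mem_singleton_iff, midpoint_eq_left_iff] at h'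
    exact hab h'

lemma midpoint_mem_hull {a b : Plane} {s : Set Plane} (ha : a ∈ s) (hb : b ∈ s) :
    midpoint ℝ a b ∈ convexHull ℝ s :=
  (convex_convexHull ℝ s).midpoint_mem (subset_convexHull ℝ _ ha) (subset_convexHull ℝ _ hb)

/-- If every face meeting the midpoint of `a b` has `a` and `b` as vertices, then on each side
of `a b` on which there are points of `A` the segment bounds a triangle. -/
lemma IsTriangulation.exists_triangle_of (hT : IsTriangulation A T) [DecidableEq Plane]
    {a b d : Plane} (ha : a ∈ A) (hb : b ∈ A) (hd : d ∈ A)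
    (h : ∀ t ∈ T.faces, midpoint ℝ a b ∈ convexHull ℝ (t : Set Plane) → a ∈ t ∧ b ∈ t)
    (σ : ℝ) (hσ : 0 < σ * orient a b d) :
    ∃ e ∈ A, 0 < σ * orient a b e ∧ {a, b, e} ∈ T.faces := by
  -- a face slightly beyond the midpoint has `a`, `b` and a vertex on the side of `d`
  obtain ⟨t, ht, hqt, ε, hε, -, hmt⟩ := hT.exists_face_near
    (midpoint_mem_hull (show a ∈ (A : Set Plane) from ha) hb) hd
  obtain ⟨hat, hbt⟩ := h t ht hqt
  have : ∃ e ∈ t, 0 < σ * orient a b e := by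
    by_contra! hcon
    have := orient_nonneg_of_mem_convexHull (a := a) (b := b) (-σ)
      (fun y hy => by have := hcon y hy; linarith) hmt
    rw [orient_lineMap, orient_midpoint] at this
    nlinarith
  obtain ⟨e, het, he⟩ := this
  refine ⟨e, hT.face_subset ht het, he, T.down_closed ht ?_ (by simp)⟩
  intro x hx; simp at hx; rcases hx with rfl | rfl | rfl <;> assumption

/-- An edge of a triangulation bounds a triangle on each side on which there are points. -/
lemma IsTriangulation.exists_triangle_edge (hT : IsTriangulation A T) [DecidableEq Plane]
    {a b d : Plane} (hab : {a, b} ∈ T.faces) (hd : d ∈ A)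
    (σ : ℝ) (hσ : 0 < σ * orient a b d) :
    ∃ e ∈ A, 0 < σ * orient a b e ∧ {a, b, e} ∈ T.faces := by
  have hs := hT.face_subset hab
  refine hT.exists_triangle_of (hs (by simp)) (hs (by simp)) hd ?_ σ hσ
  intro t ht hq
  apply eq_of_midpoint_mem
  have := T.inter_subset_convexHull ht hab ⟨hq, midpoint_mem_hull (by simp) (by simp)⟩
  rwa [← Finset.coe_inter] at this

/-- An edge of the convex hull bounds a triangle. -/
lemma IsTriangulation.exists_triangle_hull (hT : IsTriangulation A T) [DecidableEq Plane]
    {a b d : Plane} (ha : a ∈ A) (hb : b ∈ A) (hd : d ∈ A)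
    (σ : ℝ) (hσ : 0 < σ * orient a b d)
    (hh : ∀ e ∈ A, e ≠ a → e ≠ b → 0 < σ * orient a b e) :
    ∃ e ∈ A, 0 < σ * orient a b e ∧ {a, b, e} ∈ T.faces := by
  refine hT.exists_triangle_of ha hb hd ?_ σ hσ
  intro t ht hq
  apply eq_of_midpoint_mem
  have key : ∀ y ∈ t, 0 ≤ σ * orient a b y := by
    intro y hy
    by_cases h1 : y = a
    · rw [h1, orient_self_left]; simp
    by_cases h2 : y = b
    · rw [h2, orient_self_right]; simp
    exact (hh y (hT.face_subset ht hy) h1 h2).le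
  have := mem_convexHull_of_max (-(σ • orientLin a b)) (u := -(σ * orientLin a b a)) (s := t)
    (fun y hy => by have := key y hy; rw [orient_eq_lin] at this; simp; linarith) hq
    (by have := orient_midpoint a b; rw [orient_eq_lin] at this
        rw [LinearMap.neg_apply, LinearMap.smul_apply, sub_eq_zero.1 this, smul_eq_mul])
  refine convexHull_mono ?_ this
  intro y hy
  simp only [Finset.coe_filter, Set.mem_ofPred_eq, LinearMap.neg_apply, LinearMap.smul_apply,
    smul_eq_mul] at hy
  have h0 : σ * orient a b y = 0 := by rw [orient_eq_lin]; linarith [hy.2]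
  simp only [Finset.coe_inter, Set.mem_inter_iff, Finset.mem_coe]
  refine ⟨hy.1, ?_⟩
  by_contra hne
  simp at hne
  exact (hh y (hT.face_subset ht hy.1) hne.1 hne.2).ne' h0

/-- Two triangles of a triangulation that lie on the same side of a common edge are equal. -/
lemma triangle_side_unique [DecidableEq Plane] {a b c d : Plane}
    (hc : {a, b, c} ∈ T.faces) (hd : {a, b, d} ∈ T.faces) (σ : ℝ)
    (h1 : 0 < σ * orient a b c) (h2 : 0 < σ * orient a b d) : c = d := by
  by_contra hcd
  wlog hσ : 0 < σ generalizing a b σ with H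
  · refine H (a := b) (b := a) ?_ ?_ (-σ) ?_ ?_ ?_
    · rwa [show ({b, a, c} : Finset Plane) = {a, b, c} from Finset.insert_comm _ _ _]
    · rwa [show ({b, a, d} : Finset Plane) = {a, b, d} from Finset.insert_comm _ _ _]
    · rw [orient_swap]; linarith
    · rw [orient_swap]; linarith
    · have : σ ≠ 0 := by rintro rfl; simp at h1
      have := lt_of_le_of_ne (not_lt.1 hσ) this
      linarith
  have h1 := (mul_pos_iff_of_pos_left hσ).1 h1
  have h2 := (mul_pos_iff_of_pos_left hσ).1 h2
  -- points of the triangle `a b c` close to the midpoint of `a b` lie in both triangles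
  set q := midpoint ℝ a b with hq
  let x : ℝ → Plane := fun ε => AffineMap.lineMap q c ε
  have hx : Continuous x := AffineMap.lineMap_continuous
  have hx0 : x 0 = q := AffineMap.lineMap_apply_zero _ _
  have e1 : orient q b d = orient a b d / 2 := by
    simp [hq, orient, midpoint, AffineMap.lineMap_apply]; ring
  have e2 : orient q d a = orient a b d / 2 := by
    simp [hq, orient, midpoint, AffineMap.lineMap_apply]; ring
  have c1 : Filter.Tendsto (fun ε => orient (x ε) b d) (nhdsWithin 0 (Set.Ioi 0))
      (nhds (orient a b d / 2)) := by
    rw [← e1, ← hx0]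
    have : Continuous fun ε => orient (x ε) b d := by unfold orient; fun_prop
    exact (this.tendsto 0).mono_left nhdsWithin_le_nhds
  have c2 : Filter.Tendsto (fun ε => orient (x ε) d a) (nhdsWithin 0 (Set.Ioi 0))
      (nhds (orient a b d / 2)) := by
    rw [← e2, ← hx0]
    have : Continuous fun ε => orient (x ε) d a := by unfold orient; fun_prop
    exact (this.tendsto 0).mono_left nhdsWithin_le_nhds
  have c3 : ∀ᶠ ε : ℝ in nhdsWithin 0 (Set.Ioi 0), ε ∈ Set.Ioc (0 : ℝ) 1 :=
    Ioc_mem_nhdsGT one_pos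
  obtain ⟨ε, ⟨hε1, hε2⟩, hε3⟩ := (((c1.eventually (lt_mem_nhds (half_pos h2))).and
    (c2.eventually (lt_mem_nhds (half_pos h2)))).and c3).exists
  have hxo : orient a b (x ε) = ε * orient a b c := by
    rw [orient_lineMap, orient_midpoint]; ring
  have hxp : 0 < orient a b (x ε) := by rw [hxo]; exact mul_pos hε3.1 h1
  have m1 : x ε ∈ convexHull ℝ (({a, b, c} : Finset Plane) : Set Plane) :=
    (convex_convexHull ℝ _).lineMap_mem (midpoint_mem_hull (by simp) (by simp))
      (subset_convexHull ℝ _ (by simp)) ⟨hε3.1.le, hε3.2⟩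
  have m2 : x ε ∈ convexHull ℝ (({a, b, d} : Finset Plane) : Set Plane) := by
    have := mem_triangle (a := a) (b := b) (c := d) (p := x ε)
      (by rw [← orient_rotate]; exact hxp.le) hε1.le hε2.le h2
    simpa using this
  have m := T.inter_subset_convexHull hc hd ⟨m1, m2⟩
  have hsub : ((({a, b, c} : Finset Plane) : Set Plane) ∩ (({a, b, d} : Finset Plane) : Set Plane))
      ⊆ {a, b} := by
    intro y hy
    simp at hy ⊢
    grind
  have := orient_nonneg_of_mem_convexHull (a := a) (b := b) (-1) (s := {a, b}) (by
    intro y hy; simp at hy; rcases hy with rfl | rfl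
    · simp [orient_self_left]
    · simp [orient_self_right]) (convexHull_mono hsub m)
  linarith

/-- Every face lies in a triangle. -/
lemma IsTriangulation.exists_triangle_superset (hT : IsTriangulation A T)
    (hgp : InGeneralPosition A) (hA : 3 ≤ A.card) {s : Finset Plane} (hs : s ∈ T.faces) :
    ∃ t ∈ T.faces, t.card = 3 ∧ s ⊆ t := by
  classical
  have hsA := hT.face_subset hs
  -- an edge has a point of `A` off its line, hence a triangle on the side of that point
  have two : ∀ s ∈ T.faces, s.card = 2 → ∃ t ∈ T.faces, t.card = 3 ∧ s ⊆ t := by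
    intro s hs h2
    obtain ⟨a, b, hab, rfl⟩ := Finset.card_eq_two.1 h2
    have hsA := hT.face_subset hs
    obtain ⟨d, hd, hdn⟩ := Finset.exists_mem_notMem_of_card_lt_card
      (s := {a, b}) (t := A) (by omega)
    simp only [Finset.mem_insert, Finset.mem_singleton, not_or] at hdn
    have hne : orient a b d ≠ 0 := fun h0 =>
      hgp a (hsA (by simp)) b (hsA (by simp)) d hd hab (Ne.symm hdn.2) (Ne.symm hdn.1)
        ((orient_eq_zero_iff_collinear hab).1 h0)
    obtain ⟨e, -, he, hf⟩ := hT.exists_triangle_edge hs hd (orient a b d)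
      (mul_self_pos.2 hne)
    refine ⟨_, hf, ?_, ?_⟩
    · rw [Finset.card_eq_three]
      refine ⟨a, b, e, hab, ?_, ?_, rfl⟩
      · rintro rfl; rw [orient_self_left] at he; simp at he
      · rintro rfl; rw [orient_self_right] at he; simp at he
    · intro x hx; simp at hx ⊢; tauto
  have h3 := hT.1 s hs
  have h0 := Finset.card_pos.2 (T.nonempty_of_mem_faces hs)
  obtain h | h | h : s.card = 1 ∨ s.card = 2 ∨ s.card = 3 := by omega
  · obtain ⟨a, rfl⟩ := Finset.card_eq_one.1 h
    obtain ⟨d, hd, hda⟩ := Finset.exists_mem_ne (s := A) (by omega) a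
    -- a vertex lies in an edge or a triangle that contains points near it towards `d`
    obtain ⟨t, ht, hqt, ε, hε, -, hm⟩ := hT.exists_face_near
      (q := a) (subset_convexHull ℝ _ (hsA (by simp))) hd
    have hat : a ∈ t := (SimplicialComplex.vertex_mem_convexHull_iff hs ht).1 hqt
    have ht3 := hT.1 t ht
    have ht1 : t.card ≠ 1 := by
      intro h1
      obtain ⟨a', rfl⟩ := Finset.card_eq_one.1 h1
      simp at hat; subst hat
      simp [AffineMap.lineMap_apply, hε.ne', sub_eq_zero, hda] at hm
    have ht0 := Finset.card_pos.2 ⟨a, hat⟩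
    obtain h | h : t.card = 2 ∨ t.card = 3 := by omega
    · obtain ⟨t', ht', hc, hss⟩ := two t ht h
      exact ⟨t', ht', hc, by simpa using hss hat⟩
    · exact ⟨t, ht, h, by simpa using hat⟩
  · exact two s hs h
  · exact ⟨s, hs, h, le_rfl⟩

end FromTriangulation

/-! ### Triangulations from coverings of generic points -/

section Gluing

variable {A : Finset Plane}

lemma InGeneralPosition.affineIndependent (hgp : InGeneralPosition A) (hA : 3 ≤ A.card)
    {s : Finset Plane} (hs : s ⊆ A) (h3 : s.card ≤ 3) :
    AffineIndependent ℝ ((↑) : s → Plane) := by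
  classical
  obtain ⟨u, hsu, huA, hu⟩ := Finset.exists_subsuperset_card_eq hs h3 hA
  obtain ⟨a, b, c, hab, hac, hbc, rfl⟩ := Finset.card_eq_three.1 hu
  have := hgp a (huA (by simp)) b (huA (by simp)) c (huA (by simp)) hab hbc hac
  have h := (affineIndependent_iff_not_collinear_set.2 this).range
  refine AffineIndependent.mono (t := Set.range ![a, b, c]) (s := (s : Set Plane)) h ?_
  intro x hx
  have := hsu hx
  simp at this ⊢
  grind

lemma InGeneralPosition.affineSpan_eq_top (hgp : InGeneralPosition A)
    {s : Finset Plane} (hs : s ⊆ A) (h3 : s.card = 3) :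
    affineSpan ℝ (s : Set Plane) = ⊤ := by
  have hi := hgp.affineIndependent (by have := Finset.card_le_card hs; omega) hs h3.le
  have := hi.affineSpan_eq_top_iff_card_eq_finrank_add_one.2 (by simp [h3])
  simpa using this

lemma InGeneralPosition.closure_interior (hgp : InGeneralPosition A)
    {s : Finset Plane} (hs : s ⊆ A) (h3 : 3 ≤ s.card) :
    closure (interior (convexHull ℝ (s : Set Plane))) = convexHull ℝ (s : Set Plane) := by
  obtain ⟨t, hts, ht⟩ := Finset.exists_subset_card_eq h3
  have hne : (interior (convexHull ℝ (s : Set Plane))).Nonempty := by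
    rw [interior_convexHull_nonempty_iff_affineSpan_eq_top, eq_top_iff,
      ← hgp.affineSpan_eq_top (hts.trans hs) ht]
    exact affineSpan_mono ℝ (Finset.coe_subset.2 hts)
  rw [(convex_convexHull ℝ _).closure_interior_eq_closure_of_nonempty_interior hne]
  exact ((Finset.finite_toSet s).isClosed_convexHull ℝ).closure_eq

/-- A point is generic for `A` if it lies on no line through two points of `A` and on no vertical
line through a point of `A`. -/
def IsGeneric (A : Finset Plane) (p : Plane) : Prop :=
  ∀ a ∈ A, p 0 ≠ a 0 ∧ ∀ b ∈ A, a ≠ b → orient p a b ≠ 0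

lemma dense_ne (f : Plane →ₗ[ℝ] ℝ) (hf : f ≠ 0) (u : ℝ) : Dense {p | f p ≠ u} :=
  (dense_compl_singleton u).preimage
    (LinearMap.isOpenMap_of_finiteDimensional f (LinearMap.surjective hf))

lemma isOpen_ne_lin (f : Plane →ₗ[ℝ] ℝ) (u : ℝ) : IsOpen {p | f p ≠ u} :=
  isOpen_compl_singleton.preimage f.continuous_of_finiteDimensional

lemma orientLin_ne_zero {a b : Plane} (hab : a ≠ b) : orientLin a b ≠ 0 := by
  intro h
  apply hab
  have h0 := DFunLike.congr_fun h (EuclideanSpace.single 0 1)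
  have h1 := DFunLike.congr_fun h (EuclideanSpace.single 1 1)
  simp [orientLin] at h0 h1
  ext i; fin_cases i <;> simp <;> linarith

lemma dense_isGeneric (A : Finset Plane) : Dense {p | IsGeneric A p} := by
  have h1 : Dense (⋂ a ∈ A, {p : Plane | p 0 ≠ a 0}) := by
    have key : (EuclideanSpace.proj (0 : Fin 2) : Plane →L[ℝ] ℝ).toLinearMap ≠ 0 := by
      intro h
      simpa using DFunLike.congr_fun h (EuclideanSpace.single 0 1)
    refine dense_biInter_of_isOpen (S := (A : Set Plane)) ?_ (Finset.countable_toSet A) ?_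
    · intro a _
      exact isOpen_ne_lin (EuclideanSpace.proj (0 : Fin 2) : Plane →L[ℝ] ℝ).toLinearMap (a 0)
    · intro a _
      exact dense_ne _ key (a 0)
  have h2o : ∀ x ∈ (A.offDiag : Set (Plane × Plane)),
      IsOpen {p : Plane | orientLin x.1 x.2 p ≠ orientLin x.1 x.2 x.1} :=
    fun x _ => isOpen_ne_lin _ _
  have h2 : Dense (⋂ x ∈ (A.offDiag : Set (Plane × Plane)),
      {p : Plane | orientLin x.1 x.2 p ≠ orientLin x.1 x.2 x.1}) := by
    refine dense_biInter_of_isOpen h2o (Finset.countable_toSet _) ?_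
    intro x hx
    exact dense_ne _ (orientLin_ne_zero (by simp at hx; exact hx.2.2)) _
  refine (h1.inter_of_isOpen_right h2
    (Set.Finite.isOpen_biInter (Finset.finite_toSet _) h2o)).mono ?_
  rintro p ⟨hp1, hp2⟩ a ha
  refine ⟨by simpa using Set.mem_iInter₂.1 hp1 a ha, fun b hb hab => ?_⟩
  have := Set.mem_iInter₂.1 hp2 (a, b) (by simp [ha, hb, hab])
  simp only [Set.mem_ofPred_eq] at this
  rw [← orient_rotate, orient_eq_lin, sub_ne_zero]
  exact this

/-- Three points on a common level line of a nonzero linear functional are collinear. -/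
lemma eq_zero_of_three {f : Plane →ₗ[ℝ] ℝ} {u : ℝ} {x y z : Plane} (hx : f x = u) (hy : f y = u)
    (hz : f z = u) (hf : f ≠ 0) : orient x y z = 0 := by
  have hv : ∀ v : Plane, f v = v 0 * f (EuclideanSpace.single 0 1)
      + v 1 * f (EuclideanSpace.single 1 1) := by
    intro v
    rw [← smul_eq_mul, ← smul_eq_mul, ← map_smul, ← map_smul, ← map_add]
    congr 1
    ext i; fin_cases i <;> simp
  rw [hv] at hx hy hz
  by_contra hne
  apply hf
  set α := f (EuclideanSpace.single 0 1)
  set β := f (EuclideanSpace.single 1 1)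
  have hα : α * orient x y z = 0 := by
    simp only [orient]; linear_combination (z 1 - x 1) * (hy - hx) - (y 1 - x 1) * (hz - hx)
  have hβ : β * orient x y z = 0 := by
    simp only [orient]; linear_combination (y 0 - x 0) * (hz - hx) - (z 0 - x 0) * (hy - hx)
  have hα' := (mul_eq_zero.1 hα).resolve_right hne
  have hβ' := (mul_eq_zero.1 hβ).resolve_right hne
  ext v
  rw [hv, hα', hβ']; simp

/-- Two triangles on points in general position with disjoint interiors meet in a common face:
a separating line contains at most two of their vertices. -/
lemma InGeneralPosition.inter_subset (hgp : InGeneralPosition A) {s t : Finset Plane}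
    (hs : s ⊆ A) (ht : t ⊆ A) (hs3 : s.card = 3) (ht3 : t.card = 3)
    (hdisj : Disjoint (interior (convexHull ℝ (s : Set Plane)))
      (interior (convexHull ℝ (t : Set Plane)))) :
    convexHull ℝ (s : Set Plane) ∩ convexHull ℝ (t : Set Plane)
      ⊆ convexHull ℝ (s ∩ t : Set Plane) := by
  classical
  -- `f = u` is a line that weakly separates the two triangles
  obtain ⟨f, u, hfs, hft⟩ := geometric_hahn_banach_open_open
    (convex_convexHull ℝ (s : Set Plane)).interior isOpen_interior
    (convex_convexHull ℝ (t : Set Plane)).interior isOpen_interior hdisj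
  have hcs := hgp.closure_interior hs hs3.ge
  have hct := hgp.closure_interior ht ht3.ge
  have hs' : ∀ x ∈ convexHull ℝ (s : Set Plane), f x ≤ u := by
    rw [← hcs]
    exact closure_minimal (t := {x | f x ≤ u}) (fun x hx => (hfs x hx).le)
      (isClosed_le f.continuous continuous_const)
  have ht' : ∀ x ∈ convexHull ℝ (t : Set Plane), u ≤ f x := by
    rw [← hct]
    exact closure_minimal (t := {x | u ≤ f x}) (fun x hx => (hft x hx).le)
      (isClosed_le continuous_const f.continuous)
  have hf0 : (f : Plane →ₗ[ℝ] ℝ) ≠ 0 := by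
    intro h0
    have hf : ∀ x, f x = 0 := fun x => DFunLike.congr_fun h0 x
    have hn : ∀ r : Finset Plane, r.card = 3 →
        closure (interior (convexHull ℝ (r : Set Plane))) = convexHull ℝ (r : Set Plane) →
        (interior (convexHull ℝ (r : Set Plane))).Nonempty := by
      intro r hr hc
      rw [Set.nonempty_iff_ne_empty]; intro he
      rw [he, closure_empty, eq_comm, convexHull_eq_empty] at hc
      simp at hc; simp [hc] at hr
    obtain ⟨x, hx⟩ := hn s hs3 hcs
    obtain ⟨y, hy⟩ := hn t ht3 hct
    have h1 := hfs x hx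
    have h2 := hft y hy
    rw [hf] at h1 h2; linarith
  rintro x ⟨hxs, hxt⟩
  have hxu : f x = u := le_antisymm (hs' x hxs) (ht' x hxt)
  -- a common point is in the hull of the vertices of `s`, and of those of `t`, on the line
  have m1 := mem_convexHull_of_max (f : Plane →ₗ[ℝ] ℝ) (u := u)
    (fun y hy => hs' y (subset_convexHull ℝ _ hy)) hxs hxu
  have m2 := mem_convexHull_of_max (-(f : Plane →ₗ[ℝ] ℝ)) (u := -u)
    (fun y hy => neg_le_neg (ht' y (subset_convexHull ℝ _ hy))) hxt (by simp [hxu])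
  set s₀ := s.filter (fun y => (f : Plane →ₗ[ℝ] ℝ) y = u) with hs₀
  set t₀ := t.filter (fun y => (-(f : Plane →ₗ[ℝ] ℝ)) y = -u) with ht₀
  have hu : ∀ y ∈ s₀ ∪ t₀, y ∈ A ∧ (f : Plane →ₗ[ℝ] ℝ) y = u := by
    intro y hy
    rcases Finset.mem_union.1 hy with h | h
    · rw [hs₀, Finset.mem_filter] at h; exact ⟨hs h.1, h.2⟩
    · rw [ht₀, Finset.mem_filter] at h; exact ⟨ht h.1, by simpa using h.2⟩
  have hcard : (s₀ ∪ t₀).card ≤ 2 := by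
    by_contra! h
    obtain ⟨a, ha, b, hb, c, hc, hab, hac, hbc⟩ := Finset.two_lt_card.1 h
    exact hgp a (hu a ha).1 b (hu b hb).1 c (hu c hc).1 hab hbc hac
      ((orient_eq_zero_iff_collinear hab).1
        (eq_zero_of_three (hu a ha).2 (hu b hb).2 (hu c hc).2 hf0))
  -- two sets of vertices of one simplex have hulls that meet in the hull of the intersection
  have hi := hgp.affineIndependent (by have := Finset.card_le_card hs; omega)
    (s := s₀ ∪ t₀) (fun y hy => (hu y hy).1) (by omega)
  have := hi.convexHull_inter Finset.subset_union_left Finset.subset_union_right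
  have hx : x ∈ convexHull ℝ ((s₀ : Set Plane) ∩ t₀) := by rw [this]; exact ⟨m1, m2⟩
  exact convexHull_mono (Set.inter_subset_inter (Finset.coe_subset.2 (Finset.filter_subset _ _))
    (Finset.coe_subset.2 (Finset.filter_subset _ _))) hx

/-- Triangles that cover the generic points of the hull exactly once, and use all the points,
form a triangulation. -/
theorem InGeneralPosition.exists_triangulation (hgp : InGeneralPosition A) (hA : 3 ≤ A.card)
    {ι : Type*} (G : Finset ι) (tri : ι → Finset Plane) (hcard : ∀ τ ∈ G, (tri τ).card = 3)
    (hsub : ∀ τ ∈ G, tri τ ⊆ A)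
    (hcov : ∀ p, IsGeneric A p → p ∈ convexHull ℝ (A : Set Plane) →
      ∃ τ ∈ G, p ∈ convexHull ℝ (tri τ : Set Plane))
    (huniq : ∀ p, IsGeneric A p → ∀ τ ∈ G, ∀ τ' ∈ G, p ∈ convexHull ℝ (tri τ : Set Plane) →
      p ∈ convexHull ℝ (tri τ' : Set Plane) → τ = τ')
    (hvert : ∀ a ∈ A, ∃ τ ∈ G, a ∈ tri τ) :
    ∃ T, IsTriangulation A T ∧
      ∀ s, s ∈ T.faces ↔ s.Nonempty ∧ ∃ τ ∈ G, s ⊆ tri τ := by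
  classical
  -- triangles with overlapping interiors would share a generic point
  have hcompat : ∀ τ ∈ G, ∀ τ' ∈ G,
      convexHull ℝ (tri τ : Set Plane) ∩ convexHull ℝ (tri τ' : Set Plane)
        ⊆ convexHull ℝ (tri τ ∩ tri τ' : Set Plane) := by
    intro τ hτ τ' hτ'
    by_cases h : τ = τ'
    · subst h; simp
    refine hgp.inter_subset (hsub τ hτ) (hsub τ' hτ') (hcard τ hτ) (hcard τ' hτ') ?_
    rw [Set.disjoint_iff_inter_eq_empty]
    by_contra hne
    obtain ⟨p, hp, hpg⟩ := (dense_isGeneric A).inter_open_nonempty _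
      (isOpen_interior.inter isOpen_interior) (Set.nonempty_iff_ne_empty.2 hne)
    exact h (huniq p hpg τ hτ τ' hτ' (interior_subset hp.1) (interior_subset hp.2))
  let T : SimplicialComplex ℝ Plane := SimplicialComplex.ofErase {s | ∃ τ ∈ G, s ⊆ tri τ}
    (by rintro s ⟨τ, hτ, hs⟩
        exact hgp.affineIndependent hA (hs.trans (hsub τ hτ))
          ((Finset.card_le_card hs).trans (hcard τ hτ).le))
    (by rintro s t hts ⟨τ, hτ, hs⟩; exact ⟨τ, hτ, hts.trans hs⟩)
    (by rintro s ⟨τ, hτ, hs⟩ t ⟨τ', hτ', ht⟩ x ⟨hxs, hxt⟩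
        have hx := hcompat τ hτ τ' hτ' ⟨convexHull_mono hs hxs, convexHull_mono ht hxt⟩
        rw [← Finset.coe_inter] at hx
        have i1 := hgp.affineIndependent hA (hsub τ hτ) (hcard τ hτ).le
        have i2 := hgp.affineIndependent hA (hsub τ' hτ') (hcard τ' hτ').le
        have y1 : x ∈ convexHull ℝ ((s : Set Plane) ∩ (tri τ ∩ tri τ' : Finset Plane)) := by
          rw [i1.convexHull_inter hs Finset.inter_subset_left]; exact ⟨hxs, hx⟩
        rw [← Finset.coe_inter] at y1
        have y2 : x ∈ convexHull ℝ ((t : Set Plane) ∩ (s ∩ (tri τ ∩ tri τ') : Finset Plane)) := by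
          rw [i2.convexHull_inter ht
            (Finset.inter_subset_right.trans Finset.inter_subset_right)]; exact ⟨hxt, y1⟩
        refine convexHull_mono ?_ y2
        intro y hy; simp at hy ⊢; tauto)
  have hfaces : ∀ s, s ∈ T.faces ↔ s.Nonempty ∧ ∃ τ ∈ G, s ⊆ tri τ := by
    intro s
    change s ∈ {s | ∃ τ ∈ G, s ⊆ tri τ} \ {∅} ↔ _
    simp [Finset.nonempty_iff_ne_empty, and_comm]
  refine ⟨T, ⟨?_, ?_, ?_⟩, hfaces⟩
  · intro s hs
    obtain ⟨-, τ, hτ, h⟩ := (hfaces s).1 hs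
    exact (Finset.card_le_card h).trans (hcard τ hτ).le
  · apply Set.Subset.antisymm
    · intro x hx
      obtain ⟨s, hs, hxs⟩ := SimplicialComplex.mem_space_iff.1 hx
      obtain ⟨-, τ, hτ, h⟩ := (hfaces s).1 hs
      exact convexHull_mono (Finset.coe_subset.2 (h.trans (hsub τ hτ))) hxs
    · have hC : IsClosed (⋃ τ ∈ G, convexHull ℝ (tri τ : Set Plane)) :=
        Set.Finite.isClosed_biUnion (Finset.finite_toSet G)
          fun τ _ => (Finset.finite_toSet _).isClosed_convexHull ℝ
      -- the union of the triangles is closed and contains the dense set of generic points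
      have h1 : convexHull ℝ (A : Set Plane) ⊆ ⋃ τ ∈ G, convexHull ℝ (tri τ : Set Plane) := by
        rw [← hgp.closure_interior le_rfl hA]
        refine closure_minimal ?_ hC
        refine ((dense_isGeneric A).open_subset_closure_inter isOpen_interior).trans ?_
        refine closure_minimal ?_ hC
        rintro p ⟨hp, hpg⟩
        obtain ⟨τ, hτ, h⟩ := hcov p hpg (interior_subset hp)
        exact Set.mem_biUnion hτ h
      intro x hx
      obtain ⟨τ, hτ, h⟩ := Set.mem_iUnion₂.1 (h1 hx)
      exact SimplicialComplex.mem_space_iff.2 ⟨tri τ, (hfaces _).2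
        ⟨Finset.card_pos.1 (by rw [hcard τ hτ]; norm_num), τ, hτ, le_rfl⟩, h⟩
  · ext a
    rw [SimplicialComplex.mem_vertices, hfaces]
    simp only [Finset.singleton_nonempty, true_and, Finset.singleton_subset_iff]
    exact ⟨fun ⟨τ, hτ, h⟩ => hsub τ hτ h, fun h => hvert a h⟩

end Gluing

/-! ### Winding numbers -/

section Winding

open scoped Classical in
/-- The contribution of the directed segment `a b` to the winding number around `p`: the signed
number of times it crosses the vertical ray going down from `p`, for `p` generic. -/
noncomputable def wind (p a b : Plane) : ℤ :=
  if a 0 < p 0 ∧ p 0 < b 0 ∧ 0 < orient p a b then 1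
  else if b 0 < p 0 ∧ p 0 < a 0 ∧ 0 < orient p b a then -1 else 0

lemma wind_swap (p a b : Plane) : wind p b a = - wind p a b := by
  unfold wind
  split_ifs <;> first | rfl | (exfalso; grind)

open scoped Classical in
/-- The indicator function of the convex hull of `s`. -/
noncomputable def ind (p : Plane) (s : Finset Plane) : ℤ :=
  if p ∈ convexHull ℝ (s : Set Plane) then 1 else 0

/-- The winding number of the boundary of a triangle is its indicator function. -/
lemma wind_triangle {A : Finset Plane} {p a b c : Plane} [DecidableEq Plane] (hp : IsGeneric A p)
    (ha : a ∈ A) (hb : b ∈ A) (hc : c ∈ A) (h : 0 < orient a b c) :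
    wind p a b + wind p b c + wind p c a = ind p {a, b, c} := by
  have hab : a ≠ b := by rintro rfl; simp [orient] at h
  have hac : a ≠ c := by rintro rfl; simp [orient_self_left] at h
  have hbc : b ≠ c := by rintro rfl; simp [orient_self_right] at h
  have hmem : p ∈ convexHull ℝ (({a, b, c} : Finset Plane) : Set Plane) ↔
      0 < orient p a b ∧ 0 < orient p b c ∧ 0 < orient p c a := by
    constructor
    · intro hm
      have pos : ∀ x ∈ A, ∀ y ∈ A, x ≠ y → (∀ z ∈ ({a, b, c} : Finset Plane), 0 ≤ orient x y z) →
          0 < orient p x y := by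
        intro x hx y hy hxy hz
        refine lt_of_le_of_ne ?_ ((hp x hx).2 y hy hxy).symm
        have := orient_nonneg_of_mem_convexHull (a := x) (b := y) 1
          (fun z h' => by simpa using hz z h') hm
        rw [← orient_rotate]; linarith
      have r1 := orient_rotate a b c
      have r2 := orient_rotate b c a
      refine ⟨pos a ha b hb hab ?_, pos b hb c hc hbc ?_, pos c hc a ha hac.symm ?_⟩ <;>
      · simp [orient_self_left, orient_self_right]; linarith
    · rintro ⟨h1, h2, h3⟩
      have := mem_triangle h1.le h2.le h3.le h
      simpa using this
  have e1 : orient p a b + orient p b c + orient p c a = orient a b c := by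
    simp [orient]; ring
  have e2 : (a 0 - p 0) * orient p b c + (b 0 - p 0) * orient p c a
      + (c 0 - p 0) * orient p a b = 0 := by simp [orient]; ring
  have s1 : orient p b a = - orient p a b := by simp [orient]; ring
  have s2 : orient p c b = - orient p b c := by simp [orient]; ring
  have s3 : orient p a c = - orient p c a := by simp [orient]; ring
  have n1 := (hp a ha).2 b hb hab
  have n2 := (hp b hb).2 c hc hbc
  have n3 := (hp c hc).2 a ha hac.symm
  have x1 := (hp a ha).1
  have x2 := (hp b hb).1
  have x3 := (hp c hc).1
  unfold ind wind
  simp only [hmem, s1, s2, s3]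
  generalize orient p a b = u at *
  generalize orient p b c = v at *
  generalize orient p c a = w at *
  generalize orient a b c = o at *
  obtain ⟨x, hx⟩ : ∃ x, x = a 0 - p 0 := ⟨_, rfl⟩
  obtain ⟨y, hy⟩ : ∃ y, y = b 0 - p 0 := ⟨_, rfl⟩
  obtain ⟨z, hz⟩ : ∃ z, z = c 0 - p 0 := ⟨_, rfl⟩
  rw [← hx, ← hy, ← hz] at e2
  have a1 : a 0 < p 0 ↔ x < 0 := by rw [hx, sub_neg]
  have a2 : p 0 < a 0 ↔ 0 < x := by rw [hx, sub_pos]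
  have b1 : b 0 < p 0 ↔ y < 0 := by rw [hy, sub_neg]
  have b2 : p 0 < b 0 ↔ 0 < y := by rw [hy, sub_pos]
  have c1 : c 0 < p 0 ↔ z < 0 := by rw [hz, sub_neg]
  have c2 : p 0 < c 0 ↔ 0 < z := by rw [hz, sub_pos]
  have x1 : x ≠ 0 := by rw [hx, sub_ne_zero]; exact x1.symm
  have x2 : y ≠ 0 := by rw [hy, sub_ne_zero]; exact x2.symm
  have x3 : z ≠ 0 := by rw [hz, sub_ne_zero]; exact x3.symm
  simp only [a1, a2, b1, b2, c1, c2]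
  clear a1 a2 b1 b2 c1 c2 hx hy hz hmem s1 s2 s3
  rcases lt_or_gt_of_ne x1 with hx | hx <;> rcases lt_or_gt_of_ne x2 with hy | hy <;>
  rcases lt_or_gt_of_ne x3 with hz | hz <;> rcases lt_or_gt_of_ne n1 with hu | hu <;>
  rcases lt_or_gt_of_ne n2 with hv | hv <;> rcases lt_or_gt_of_ne n3 with hw | hw <;>
  first
  | (simp [hx, hy, hz, hu, hv, hw, hx.not_gt, hy.not_gt, hz.not_gt, hu.not_gt, hv.not_gt,
      hw.not_gt]; done)
  | (exfalso; linarith)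
  | (exfalso; nlinarith)

end Winding

/-! ### Triangulations of convex polygons -/

section Polygons

/-- The triangulations of a convex polygon with vertices `i, i + 1, …, i + n + 1`, as sets of
triangles `(a, b, c)` with `a < b < c`, split according to the triangle on the side
`(i, i + n + 1)`. -/
def polyTri : ℕ → ℕ → Finset (Finset (ℕ × ℕ × ℕ))
  | 0, _ => {∅}
  | n + 1, i => Finset.univ.biUnion fun m : Fin (n + 1) =>
      (polyTri m i ×ˢ polyTri (n - m) (i + m + 1)).image
        fun X => insert (i, i + m + 1, i + n + 2) (X.1 ∪ X.2)

lemma mem_polyTri_succ {n i : ℕ} {S : Finset (ℕ × ℕ × ℕ)} :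
    S ∈ polyTri (n + 1) i ↔ ∃ m ≤ n, ∃ X ∈ polyTri m i, ∃ Y ∈ polyTri (n - m) (i + m + 1),
      S = insert (i, i + m + 1, i + n + 2) (X ∪ Y) := by
  rw [polyTri]
  simp only [Finset.mem_biUnion, Finset.mem_univ, true_and, Finset.mem_image, Finset.mem_product,
    Prod.exists]
  constructor
  · rintro ⟨m, X, Y, ⟨hX, hY⟩, rfl⟩
    exact ⟨m, by omega, X, hX, Y, hY, rfl⟩
  · rintro ⟨m, hm, X, hX, Y, hY, rfl⟩
    exact ⟨⟨m, by omega⟩, X, Y, ⟨hX, hY⟩, rfl⟩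

lemma polyTri_range {n i : ℕ} {S : Finset (ℕ × ℕ × ℕ)} (hS : S ∈ polyTri n i) :
    ∀ a b c, (a, b, c) ∈ S → i ≤ a ∧ a < b ∧ b < c ∧ c ≤ i + n + 1 := by
  induction n using Nat.strong_induction_on generalizing i S with
  | _ n ih =>
    intro a b c h
    cases n with
    | zero => simp [polyTri] at hS; simp [hS] at h
    | succ n =>
      obtain ⟨m, hm, X, hX, Y, hY, rfl⟩ := mem_polyTri_succ.1 hS
      simp only [Finset.mem_insert, Finset.mem_union, Prod.mk.injEq] at h
      rcases h with h | h | h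
      · omega
      · have := ih m (by omega) hX a b c h; omega
      · have := ih (n - m) (by omega) hY a b c h; omega

/-- The recursion in `polyTri` is the recursion of the Catalan numbers. -/
lemma card_polyTri (n i : ℕ) : (polyTri n i).card = catalan n := by
  induction n using Nat.strong_induction_on generalizing i with
  | _ n ih =>
    cases n with
    | zero => simp [polyTri]
    | succ n =>
      rw [polyTri, Finset.card_biUnion, catalan_succ]
      · refine Finset.sum_congr rfl fun m _ => ?_
        rw [Finset.card_image_of_injOn, Finset.card_product, ih m (by omega),
          ih (n - m) (by omega)]
        rintro ⟨X, Y⟩ hX ⟨X', Y'⟩ hX' h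
        simp only [Finset.coe_product, Set.mem_prod, Finset.mem_coe] at hX hX'
        have r1 := polyTri_range hX.1
        have r2 := polyTri_range hX.2
        have r3 := polyTri_range hX'.1
        have r4 := polyTri_range hX'.2
        simp only [Finset.ext_iff, Finset.mem_insert, Finset.mem_union, Prod.forall,
          Prod.mk.injEq] at h
        simp only [Prod.mk.injEq, Finset.ext_iff, Prod.forall]
        constructor <;> intro a b c <;> have h := h a b c <;> have r1 := r1 a b c <;>
          have r2 := r2 a b c <;> have r3 := r3 a b c <;> have r4 := r4 a b c <;> grind
      · intro m _ m' _ hmm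
        rw [Function.onFun, Finset.disjoint_left]
        rintro S hS hS'
        simp only [Finset.mem_image, Finset.mem_product, Prod.exists] at hS hS'
        obtain ⟨X, Y, ⟨hX, hY⟩, rfl⟩ := hS
        obtain ⟨X', Y', ⟨hX', hY'⟩, h⟩ := hS'
        have : (i, i + m + 1, i + n + 2) ∈
            insert (i, i + (m' : ℕ) + 1, i + n + 2) (X' ∪ Y') := by rw [h]; simp
        simp only [Finset.mem_insert, Finset.mem_union, Prod.mk.injEq] at this
        rcases this with h | h | h
        · apply hmm; ext; omega
        · have := polyTri_range hX' _ _ _ h; omega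
        · have := polyTri_range hY' _ _ _ h; omega

/-- The local conditions on a set of triangles in a convex polygon with vertices `i, …, j`: every
side of a triangle has a triangle on its other side, unless it is a side of the polygon. Here `up`
concerns the long side `(a, c)` of a triangle `(a, b, c)`, and `uniq` says that there is at most one
triangle below it. -/
structure GoodPoly (i j : ℕ) (S : Finset (ℕ × ℕ × ℕ)) : Prop where
  rng : ∀ a b c, (a, b, c) ∈ S → i ≤ a ∧ a < b ∧ b < c ∧ c ≤ j
  top : i + 1 < j → ∃ b, (i, b, j) ∈ S
  uniq : ∀ a b b' c, (a, b, c) ∈ S → (a, b', c) ∈ S → b = b'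
  up : ∀ a b c, (a, b, c) ∈ S → (a ≠ i ∨ c ≠ j) →
    (∃ d, (a, c, d) ∈ S) ∨ ∃ d, (d, a, c) ∈ S
  down₁ : ∀ a b c, (a, b, c) ∈ S → a + 1 < b → ∃ d, (a, d, b) ∈ S
  down₂ : ∀ a b c, (a, b, c) ∈ S → b + 1 < c → ∃ d, (b, d, c) ∈ S

/-- If `(i, b, j)` is the triangle on the side `(i, j)`, then no other triangle reaches over `b`:
beyond the longest one there would have to be a longer one. -/
lemma GoodPoly.eq_of_over {i j b : ℕ} {S : Finset (ℕ × ℕ × ℕ)} (h : GoodPoly i j S)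
    (hb : (i, b, j) ∈ S) (N : ℕ) : ∀ a x c, (a, x, c) ∈ S → a < b → b < c →
      j - i ≤ (c - a) + N → a = i ∧ x = b ∧ c = j := by
  induction N with
  | zero =>
    intro a x c hm h1 h2 h3
    have := h.rng a x c hm
    obtain ⟨rfl, rfl⟩ : a = i ∧ c = j := by omega
    exact ⟨rfl, h.uniq _ _ _ _ hm hb, rfl⟩
  | succ N ih =>
    intro a x c hm h1 h2 h3
    have hr := h.rng a x c hm
    by_cases hac : a ≠ i ∨ c ≠ j
    · rcases h.up a x c hm hac with ⟨d, hd⟩ | ⟨d, hd⟩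
      · have hr' := h.rng _ _ _ hd
        have := ih a c d hd h1 (by omega) (by omega)
        omega
      · have hr' := h.rng _ _ _ hd
        have := ih d a c hd (by omega) h2 (by omega)
        omega
    · push Not at hac
      obtain ⟨rfl, rfl⟩ := hac
      exact ⟨rfl, h.uniq _ _ _ _ hm hb, rfl⟩

/-- The local conditions characterize triangulations: the triangle on the side `(i, j)` splits the
others into the local data of the two remaining polygons. -/
lemma GoodPoly.mem_polyTri {n i j : ℕ} (hj : j = i + n + 1) {S : Finset (ℕ × ℕ × ℕ)}
    (h : GoodPoly i j S) : S ∈ polyTri n i := by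
  induction n using Nat.strong_induction_on generalizing i j S with
  | _ n ih =>
    cases n with
    | zero =>
      simp only [polyTri, Finset.mem_singleton, Finset.eq_empty_iff_forall_notMem]
      rintro ⟨a, b, c⟩ hm
      have := h.rng a b c hm
      omega
    | succ n =>
      obtain ⟨b, hb⟩ := h.top (by omega)
      have hbr := h.rng _ _ _ hb
      have hover : ∀ a x c, (a, x, c) ∈ S → a < b → b < c → a = i ∧ x = b ∧ c = j :=
        fun a x c hm h1 h2 => h.eq_of_over hb (j - i) a x c hm h1 h2 (by omega)
      have side : ∀ a x c, (a, x, c) ∈ S → (a = i ∧ x = b ∧ c = j) ∨ c ≤ b ∨ b ≤ a := by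
        intro a x c hm
        by_cases h1 : c ≤ b
        · exact Or.inr (Or.inl h1)
        by_cases h2 : b ≤ a
        · exact Or.inr (Or.inr h2)
        exact Or.inl (hover a x c hm (by omega) (by omega))
      rw [mem_polyTri_succ]
      refine ⟨b - i - 1, by omega, S.filter (fun t => t.2.2 ≤ b), ?_,
        S.filter (fun t => b ≤ t.1), ?_, ?_⟩
      · refine ih _ (by omega) (j := b) (by omega) ⟨?_, ?_, ?_, ?_, ?_, ?_⟩
        · intro a x c hm
          simp only [Finset.mem_filter] at hm
          have := h.rng a x c hm.1
          omega
        · intro hlt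
          obtain ⟨d, hd⟩ := h.down₁ _ _ _ hb hlt
          exact ⟨d, by simp [hd]⟩
        · intro a x x' c hm hm'
          exact h.uniq a x x' c (Finset.mem_filter.1 hm).1 (Finset.mem_filter.1 hm').1
        · intro a x c hm hne
          simp only [Finset.mem_filter] at hm ⊢
          have hr := h.rng a x c hm.1
          rcases h.up a x c hm.1 (by omega) with ⟨d, hd⟩ | ⟨d, hd⟩
          · refine Or.inl ⟨d, hd, ?_⟩
            have := side _ _ _ hd; omega
          · exact Or.inr ⟨d, hd, hm.2⟩
        · intro a x c hm hlt
          simp only [Finset.mem_filter] at hm ⊢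
          obtain ⟨d, hd⟩ := h.down₁ a x c hm.1 hlt
          have := h.rng a x c hm.1
          exact ⟨d, hd, by omega⟩
        · intro a x c hm hlt
          simp only [Finset.mem_filter] at hm ⊢
          obtain ⟨d, hd⟩ := h.down₂ a x c hm.1 hlt
          exact ⟨d, hd, hm.2⟩
      · refine ih _ (by omega) (j := j) (by omega) ⟨?_, ?_, ?_, ?_, ?_, ?_⟩
        · intro a x c hm
          simp only [Finset.mem_filter] at hm
          have := h.rng a x c hm.1
          omega
        · intro hlt
          obtain ⟨d, hd⟩ := h.down₂ _ _ _ hb (by omega)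
          have e : i + (b - i - 1) + 1 = b := by omega
          rw [e]
          exact ⟨d, by simp [hd]⟩
        · intro a x x' c hm hm'
          exact h.uniq a x x' c (Finset.mem_filter.1 hm).1 (Finset.mem_filter.1 hm').1
        · intro a x c hm hne
          simp only [Finset.mem_filter] at hm ⊢
          have hr := h.rng a x c hm.1
          rcases h.up a x c hm.1 (by omega) with ⟨d, hd⟩ | ⟨d, hd⟩
          · exact Or.inl ⟨d, hd, hm.2⟩
          · refine Or.inr ⟨d, hd, ?_⟩
            have := side _ _ _ hd; omega
        · intro a x c hm hlt
          simp only [Finset.mem_filter] at hm ⊢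
          obtain ⟨d, hd⟩ := h.down₁ a x c hm.1 hlt
          exact ⟨d, hd, hm.2⟩
        · intro a x c hm hlt
          simp only [Finset.mem_filter] at hm ⊢
          obtain ⟨d, hd⟩ := h.down₂ a x c hm.1 hlt
          have := h.rng a x c hm.1
          exact ⟨d, hd, by omega⟩
      · ext ⟨a, x, c⟩
        simp only [Finset.mem_insert, Finset.mem_union, Finset.mem_filter, Prod.mk.injEq]
        constructor
        · intro hm
          rcases side a x c hm with h' | h' | h'
          · left; omega
          · exact Or.inr (Or.inl ⟨hm, h'⟩)
          · exact Or.inr (Or.inr ⟨hm, h'⟩)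
        · rintro (h' | h' | h')
          · obtain ⟨rfl, rfl, rfl⟩ : a = i ∧ x = b ∧ c = j := by omega
            exact hb
          · exact h'.1
          · exact h'.1

end Polygons

/-! ### Monotone lattice paths -/

section Paths

/-- The monotone lattice paths from `(i, j)` to `(i + n, j + m)`, as sets of steps: `(true, x, y)`
is the step from `(x, y)` to `(x + 1, y)`, and `(false, x, y)` the step to `(x, y + 1)`. -/
def latticePath : ℕ → ℕ → ℕ → ℕ → Finset (Finset (Bool × ℕ × ℕ))
  | 0, 0, _, _ => {∅}
  | n + 1, 0, i, j => (latticePath n 0 (i + 1) j).image (insert (true, i, j))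
  | 0, m + 1, i, j => (latticePath 0 m i (j + 1)).image (insert (false, i, j))
  | n + 1, m + 1, i, j => (latticePath n (m + 1) (i + 1) j).image (insert (true, i, j)) ∪
      (latticePath (n + 1) m i (j + 1)).image (insert (false, i, j))
  termination_by n m => n + m

lemma mem_latticePath {n m i j : ℕ} (hnm : n + m ≠ 0) {Z : Finset (Bool × ℕ × ℕ)} :
    Z ∈ latticePath n m i j ↔
      (∃ n', n = n' + 1 ∧ ∃ Y ∈ latticePath n' m (i + 1) j, Z = insert (true, i, j) Y) ∨
      (∃ m', m = m' + 1 ∧ ∃ Y ∈ latticePath n m' i (j + 1), Z = insert (false, i, j) Y) := by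
  cases n <;> cases m
  · simp at hnm
  all_goals rw [latticePath]; simp [eq_comm]

/-- Induction along the steps of a lattice path. -/
lemma latticePath_induction {I J : ℕ} {P : ℕ → ℕ → Finset (Bool × ℕ × ℕ) → Prop}
    (h0 : P I J ∅)
    (h1 : ∀ i j Z, i < I → j ≤ J → (true, i, j) ∉ Z → P (i + 1) j Z →
      P i j (insert (true, i, j) Z))
    (h2 : ∀ i j Z, i ≤ I → j < J → (false, i, j) ∉ Z → P i (j + 1) Z →
      P i j (insert (false, i, j) Z))
    {n m i j : ℕ} (hI : I = i + n) (hJ : J = j + m) {Z : Finset (Bool × ℕ × ℕ)}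
    (hZ : Z ∈ latticePath n m i j) :
    P i j Z ∧ ∀ d x y, (d, x, y) ∈ Z → i ≤ x ∧ j ≤ y ∧ x ≤ I ∧ y ≤ J ∧
      (d = true → x < I) ∧ (d = false → y < J) := by
  obtain ⟨N, hN⟩ : ∃ N, N = n + m := ⟨_, rfl⟩
  induction N generalizing n m i j Z with
  | zero =>
    obtain ⟨rfl, rfl⟩ : n = 0 ∧ m = 0 := by omega
    simp only [latticePath, Finset.mem_singleton] at hZ
    subst hZ
    obtain ⟨rfl, rfl⟩ : I = i ∧ J = j := by omega
    exact ⟨h0, by simp⟩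
  | succ N ih =>
    rcases (mem_latticePath (by omega)).1 hZ with ⟨n', rfl, Y, hY, rfl⟩ | ⟨m', rfl, Y, hY, rfl⟩
    · obtain ⟨hP, hr⟩ := ih (by omega) (by omega) hY (by omega)
      refine ⟨h1 i j Y (by omega) (by omega) (fun hm => ?_) hP, ?_⟩
      · have := hr _ _ _ hm; omega
      · intro d x y hm
        simp only [Finset.mem_insert, Prod.mk.injEq] at hm
        rcases hm with ⟨rfl, rfl, rfl⟩ | hm
        · simp; omega
        · have := hr _ _ _ hm; grind
    · obtain ⟨hP, hr⟩ := ih (by omega) (by omega) hY (by omega)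
      refine ⟨h2 i j Y (by omega) (by omega) (fun hm => ?_) hP, ?_⟩
      · have := hr _ _ _ hm; omega
      · intro d x y hm
        simp only [Finset.mem_insert, Prod.mk.injEq] at hm
        rcases hm with ⟨rfl, rfl, rfl⟩ | hm
        · simp; omega
        · have := hr _ _ _ hm; grind

lemma latticePath_range {n m i j : ℕ} {Z : Finset (Bool × ℕ × ℕ)}
    (hZ : Z ∈ latticePath n m i j) : ∀ d x y, (d, x, y) ∈ Z →
      i ≤ x ∧ j ≤ y ∧ x ≤ i + n ∧ y ≤ j + m ∧ (d = true → x < i + n) ∧ (d = false → y < j + m) :=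
  (latticePath_induction (P := fun _ _ _ => True) trivial (fun _ _ _ _ _ _ _ => trivial)
    (fun _ _ _ _ _ _ _ => trivial) rfl rfl hZ).2

/-- The recursion in `latticePath`, by the first step, is the one of the Pascal triangle. -/
lemma card_latticePath (n m i j : ℕ) : (latticePath n m i j).card = (n + m).choose n := by
  have inj1 : ∀ n m i j, Set.InjOn (insert (true, i, j))
      (latticePath n m (i + 1) j : Set (Finset (Bool × ℕ × ℕ))) := by
    intro n m i j X hX Y hY h
    have hx : (true, i, j) ∉ X := fun hm => by have := latticePath_range hX _ _ _ hm; omega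
    have hy : (true, i, j) ∉ Y := fun hm => by have := latticePath_range hY _ _ _ hm; omega
    rw [← Finset.erase_insert hx, ← Finset.erase_insert hy, h]
  have inj2 : ∀ n m i j, Set.InjOn (insert (false, i, j))
      (latticePath n m i (j + 1) : Set (Finset (Bool × ℕ × ℕ))) := by
    intro n m i j X hX Y hY h
    have hx : (false, i, j) ∉ X := fun hm => by have := latticePath_range hX _ _ _ hm; omega
    have hy : (false, i, j) ∉ Y := fun hm => by have := latticePath_range hY _ _ _ hm; omega
    rw [← Finset.erase_insert hx, ← Finset.erase_insert hy, h]
  fun_induction latticePath n m i j with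
  | case1 i j => simp
  | case2 n i j ih => rw [Finset.card_image_of_injOn (inj1 _ _ _ _), ih]; simp
  | case3 m i j ih => rw [Finset.card_image_of_injOn (inj2 _ _ _ _), ih]; simp
  | case4 n m i j ih1 ih2 =>
    rw [Finset.card_union_of_disjoint, Finset.card_image_of_injOn (inj1 _ _ _ _),
      Finset.card_image_of_injOn (inj2 _ _ _ _), ih1, ih2]
    · rw [show n + 1 + (m + 1) = (n + m + 1) + 1 by ring, Nat.choose_succ_succ]
      congr 2; ring
    · rw [Finset.disjoint_left]
      rintro S hS hS'
      simp only [Finset.mem_image] at hS hS'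
      obtain ⟨X, hX, rfl⟩ := hS
      obtain ⟨Y, hY, h⟩ := hS'
      have : (true, i, j) ∈ insert (false, i, j) Y := by rw [h]; simp
      simp only [Finset.mem_insert, Prod.mk.injEq, Bool.true_eq_false, false_and, false_or] at this
      have := latticePath_range hY _ _ _ this
      omega

/-- The local conditions on a set of lattice steps in the rectangle with corners `(i, j)` and
`(I, J)`: there is one step out of every point that has a step into it, and vice versa, except at
the two corners. -/
structure GoodPath (I J i j : ℕ) (Z : Finset (Bool × ℕ × ℕ)) : Prop where
  rng : ∀ d x y, (d, x, y) ∈ Z → i ≤ x ∧ j ≤ y ∧ x ≤ I ∧ y ≤ J ∧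
    (d = true → x < I) ∧ (d = false → y < J)
  start : (i ≠ I ∨ j ≠ J) → ∃ d, (d, i, j) ∈ Z
  uniq : ∀ x y, (true, x, y) ∈ Z → (false, x, y) ∉ Z
  fwd₁ : ∀ x y, (true, x, y) ∈ Z → (x + 1 ≠ I ∨ y ≠ J) → ∃ d, (d, x + 1, y) ∈ Z
  fwd₂ : ∀ x y, (false, x, y) ∈ Z → (x ≠ I ∨ y + 1 ≠ J) → ∃ d, (d, x, y + 1) ∈ Z
  back : ∀ d x y, (d, x, y) ∈ Z → (x ≠ i ∨ y ≠ j) →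
    (∃ x', x = x' + 1 ∧ (true, x', y) ∈ Z) ∨ ∃ y', y = y' + 1 ∧ (false, x, y') ∈ Z

/-- The local conditions force a monotone path: without its first step, the set satisfies them in a
smaller rectangle. -/
lemma GoodPath.mem_latticePath {I J n m i j : ℕ} (hI : I = i + n) (hJ : J = j + m)
    {Z : Finset (Bool × ℕ × ℕ)} (h : GoodPath I J i j Z) : Z ∈ latticePath n m i j := by
  obtain ⟨N, hN⟩ : ∃ N, N = n + m := ⟨_, rfl⟩
  induction N generalizing n m i j Z with
  | zero =>
    obtain ⟨rfl, rfl⟩ : n = 0 ∧ m = 0 := by omega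
    simp only [latticePath, Finset.mem_singleton, Finset.eq_empty_iff_forall_notMem]
    rintro ⟨d, x, y⟩ hm
    have := h.rng d x y hm
    cases d <;> simp at this <;> omega
  | succ N ih =>
    rw [_root_.mem_latticePath (by omega)]
    obtain ⟨d, hd⟩ := h.start (by omega)
    have hr := h.rng d i j hd
    have hne : ∀ d', (d', i, j) ∈ Z → d' = d := by
      intro d' hd'
      have := h.uniq i j
      cases d <;> cases d' <;> simp_all
    cases d with
    | true =>
      simp at hr
      refine Or.inl ⟨n - 1, by omega, Z.erase (true, i, j), ?_, (Finset.insert_erase hd).symm⟩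
      -- a step out of the line `x = i` would force one out of the point below it
      have col : ∀ y d', (d', i, j + y) ∈ Z → y = 0 := by
        intro y
        induction y with
        | zero => simp
        | succ y ihy =>
          intro d' hd'
          exfalso
          rcases h.back _ _ _ hd' (by omega) with ⟨x', hx', hm⟩ | ⟨y', hy', hm⟩
          · have := h.rng _ _ _ hm; omega
          · obtain rfl : y' = j + y := by omega
            obtain rfl := ihy _ hm
            have := hne _ hm
            simp at this
      have col' : ∀ d' x y, (d', x, y) ∈ Z → (d', x, y) ≠ (true, i, j) → i + 1 ≤ x := by
        intro d' x y hm hne'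
        have hr' := h.rng _ _ _ hm
        by_contra hlt
        obtain rfl : x = i := by omega
        have := col (y - j) d' (by rwa [show j + (y - j) = y by omega])
        obtain rfl : y = j := by omega
        exact hne' (by rw [hne _ hm])
      refine ih (by omega) (by omega) ⟨?_, ?_, ?_, ?_, ?_, ?_⟩ (by omega)
      · intro d' x y hm
        rw [Finset.mem_erase] at hm
        have h1 := h.rng _ _ _ hm.2
        have h2 := col' _ _ _ hm.2 hm.1
        exact ⟨h2, h1.2⟩
      · intro hne'
        obtain ⟨d', hd'⟩ := h.fwd₁ _ _ hd hne'
        exact ⟨d', by simp [hd']⟩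
      · intro x y hm hm'
        rw [Finset.mem_erase] at hm hm'
        exact h.uniq x y hm.2 hm'.2
      · intro x y hm hne'
        rw [Finset.mem_erase] at hm
        obtain ⟨d', hd'⟩ := h.fwd₁ _ _ hm.2 hne'
        have h2 := h.rng _ _ _ hm.2
        refine ⟨d', by simp [hd']; omega⟩
      · intro x y hm hne'
        rw [Finset.mem_erase] at hm
        obtain ⟨d', hd'⟩ := h.fwd₂ _ _ hm.2 hne'
        have h2 := col' _ _ _ hm.2 hm.1
        refine ⟨d', by simp [hd']; omega⟩
      · intro d' x y hm hne'
        rw [Finset.mem_erase] at hm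
        have h2 := col' _ _ _ hm.2 hm.1
        rcases h.back _ _ _ hm.2 (by omega) with ⟨x', rfl, hm'⟩ | ⟨y', rfl, hm'⟩
        · refine Or.inl ⟨x', rfl, ?_⟩
          rw [Finset.mem_erase]
          refine ⟨?_, hm'⟩
          simp; omega
        · refine Or.inr ⟨y', rfl, ?_⟩
          simp [hm']
    | false =>
      simp at hr
      refine Or.inr ⟨m - 1, by omega, Z.erase (false, i, j), ?_, (Finset.insert_erase hd).symm⟩
      -- likewise, a step out of the line `y = j` would force one out of the point to its left
      have col : ∀ x d', (d', i + x, j) ∈ Z → x = 0 := by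
        intro x
        induction x with
        | zero => simp
        | succ x ihx =>
          intro d' hd'
          exfalso
          rcases h.back _ _ _ hd' (by omega) with ⟨x', hx', hm⟩ | ⟨y', hy', hm⟩
          · obtain rfl : x' = i + x := by omega
            obtain rfl := ihx _ hm
            have := hne _ hm
            simp at this
          · have := h.rng _ _ _ hm; omega
      have col' : ∀ d' x y, (d', x, y) ∈ Z → (d', x, y) ≠ (false, i, j) → j + 1 ≤ y := by
        intro d' x y hm hne'
        have hr' := h.rng _ _ _ hm
        by_contra hlt
        obtain rfl : y = j := by omega
        have := col (x - i) d' (by rwa [show i + (x - i) = x by omega])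
        obtain rfl : x = i := by omega
        exact hne' (by rw [hne _ hm])
      refine ih (by omega) (by omega) ⟨?_, ?_, ?_, ?_, ?_, ?_⟩ (by omega)
      · intro d' x y hm
        rw [Finset.mem_erase] at hm
        have h1 := h.rng _ _ _ hm.2
        have h2 := col' _ _ _ hm.2 hm.1
        exact ⟨h1.1, h2, h1.2.2⟩
      · intro hne'
        obtain ⟨d', hd'⟩ := h.fwd₂ _ _ hd hne'
        exact ⟨d', by simp [hd']⟩
      · intro x y hm hm'
        rw [Finset.mem_erase] at hm hm'
        exact h.uniq x y hm.2 hm'.2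
      · intro x y hm hne'
        rw [Finset.mem_erase] at hm
        obtain ⟨d', hd'⟩ := h.fwd₁ _ _ hm.2 hne'
        have h2 := col' _ _ _ hm.2 hm.1
        refine ⟨d', by simp [hd']; omega⟩
      · intro x y hm hne'
        rw [Finset.mem_erase] at hm
        obtain ⟨d', hd'⟩ := h.fwd₂ _ _ hm.2 hne'
        have h2 := h.rng _ _ _ hm.2
        refine ⟨d', by simp [hd']; omega⟩
      · intro d' x y hm hne'
        rw [Finset.mem_erase] at hm
        have h2 := col' _ _ _ hm.2 hm.1
        rcases h.back _ _ _ hm.2 (by omega) with ⟨x', rfl, hm'⟩ | ⟨y', rfl, hm'⟩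
        · refine Or.inl ⟨x', rfl, ?_⟩
          simp [hm']
        · refine Or.inr ⟨y', rfl, ?_⟩
          rw [Finset.mem_erase]
          refine ⟨?_, hm'⟩
          simp; omega

end Paths

/-! ### The double chain -/

section DoubleChain

open scoped Classical

/-- The `i`-th point of the upper (`ε = 1`) or lower (`ε = -1`) chain. Both chains are strictly
convex towards each other, and the gap `k ^ 2` is large enough that every line through two points
of a chain has the other chain on one side. -/
noncomputable def pt (k : ℕ) (ε : ℝ) (i : ℕ) : Plane := !₂[(i : ℝ), ε * ((k : ℝ) ^ 2 + (i : ℝ) ^ 2)]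

/-- The double chain with `k` points on each chain. -/
noncomputable def dchain (k : ℕ) : Finset Plane :=
  (Finset.range k).image (pt k 1) ∪ (Finset.range k).image (pt k (-1))

/-- The signs that distinguish the two chains. -/
def IsSign (ε : ℝ) : Prop := ε = 1 ∨ ε = -1

lemma IsSign.neg {ε : ℝ} (h : IsSign ε) : IsSign (-ε) := by
  rcases h with rfl | rfl
  · exact Or.inr rfl
  · exact Or.inl (by norm_num)

lemma IsSign.one : IsSign 1 := Or.inl rfl

lemma IsSign.sq {ε : ℝ} (h : IsSign ε) : ε * ε = 1 := by
  rcases h with rfl | rfl <;> norm_num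

variable {k : ℕ} {ε : ℝ}

lemma pt_injective (k : ℕ) (ε : ℝ) : Function.Injective (pt k ε) := by
  intro i j h
  have := congrArg (fun p : Plane => p 0) h
  simpa [pt] using this

lemma pt_inj {i j : ℕ} : pt k ε i = pt k ε j ↔ i = j := (pt_injective k ε).eq_iff

lemma pt_ne (hε : IsSign ε) (hk : 0 < k) (i j : ℕ) : pt k ε i ≠ pt k (-ε) j := by
  intro h
  have h1 := congrArg (fun p : Plane => p 1) h
  have hk' : (0 : ℝ) < (k : ℝ) ^ 2 := by positivity
  have hi : (0 : ℝ) ≤ (i : ℝ) ^ 2 := by positivity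
  have hj : (0 : ℝ) ≤ (j : ℝ) ^ 2 := by positivity
  rcases hε with rfl | rfl <;> simp [pt] at h1 <;> linarith

lemma mem_dchain (hε : IsSign ε) {a : Plane} :
    a ∈ dchain k ↔ (∃ i < k, a = pt k ε i) ∨ ∃ i < k, a = pt k (-ε) i := by
  rcases hε with rfl | rfl
  · simp [dchain, eq_comm]
  · simp [dchain, eq_comm, or_comm]

lemma pt_mem (hε : IsSign ε) (hk : 0 < k) {i : ℕ} : pt k ε i ∈ dchain k ↔ i < k := by
  rw [mem_dchain hε]
  constructor
  · rintro (⟨j, hj, h⟩ | ⟨j, hj, h⟩)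
    · rwa [pt_inj.1 h]
    · exact absurd h (pt_ne hε hk _ _)
  · intro h
    exact Or.inl ⟨i, h, rfl⟩

lemma pt_mem_of (hε : IsSign ε) (hk : 0 < k) {i : ℕ} (hi : i < k) : pt k ε i ∈ dchain k :=
  (pt_mem hε hk).2 hi

lemma card_dchain (hk : 0 < k) : (dchain k).card = 2 * k := by
  rw [dchain, Finset.card_union_of_disjoint, Finset.card_image_of_injective _ (pt_injective _ _),
    Finset.card_image_of_injective _ (pt_injective _ _), Finset.card_range, two_mul]
  rw [Finset.disjoint_left]
  simp only [Finset.mem_image, not_exists, not_and]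
  rintro a ⟨i, -, rfl⟩ j - h
  exact pt_ne IsSign.one hk i j h.symm

/-- The twice signed area of a triangle with a side on one chain and apex on the other, up to sign
and divided by the length of the side in the first coordinate. -/
def gap (k i j m : ℕ) : ℝ := 2 * (k : ℝ) ^ 2 + (m : ℝ) ^ 2 + ((i : ℝ) + j) * m - i * j

lemma gap_pos {i j m : ℕ} (hk : 0 < k) (hi : i < k) (hj : j < k) : 0 < gap k i j m := by
  have hi' : (i : ℝ) ≤ k := by exact_mod_cast hi.le
  have hj' : (j : ℝ) ≤ k := by exact_mod_cast hj.le
  have hk' : (0 : ℝ) < k := by exact_mod_cast hk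
  have h0 : (0 : ℝ) ≤ i := by positivity
  have h1 : (0 : ℝ) ≤ j := by positivity
  have h2 : (0 : ℝ) ≤ m := by positivity
  have := mul_le_mul hi' hj' h1 hk'.le
  unfold gap
  nlinarith [mul_nonneg h0 h2, mul_nonneg h1 h2, mul_pos hk' hk']

lemma orient_same (hε : IsSign ε) (i j m : ℕ) :
    ε * orient (pt k ε i) (pt k ε j) (pt k ε m) = ((j : ℝ) - i) * (m - i) * (m - j) := by
  have := hε.sq
  simp only [orient, pt]
  simp
  linear_combination ((j : ℝ) - i) * (m - i) * (m - j) * this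

lemma orient_cross (hε : IsSign ε) (i j m : ℕ) :
    ε * orient (pt k ε i) (pt k ε j) (pt k (-ε) m) = ((i : ℝ) - j) * gap k i j m := by
  have := hε.sq
  simp only [orient, pt, gap]
  simp
  linear_combination ((i : ℝ) - j) * (2 * (k : ℝ) ^ 2 + (m : ℝ) ^ 2 + ((i : ℝ) + j) * m - i * j) * this

lemma orient_cross₁ (hε : IsSign ε) (i j m : ℕ) :
    ε * orient (pt k ε i) (pt k (-ε) j) (pt k ε m) = ((m : ℝ) - i) * gap k m i j := by
  rw [orient_rotate (pt k ε m), orient_cross hε]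

lemma orient_cross₂ (hε : IsSign ε) (i j m : ℕ) :
    ε * orient (pt k ε i) (pt k (-ε) j) (pt k (-ε) m) = ((m : ℝ) - j) * gap k j m i := by
  have := orient_cross (k := k) hε.neg j m i
  rw [neg_neg] at this
  rw [← orient_rotate (pt k ε i)]
  linarith

lemma cross_pos (hε : IsSign ε) (hk : 0 < k) {i j : ℕ} (m : ℕ) (hi : i < k) (hj : j < k)
    (hij : i < j) : 0 < -ε * orient (pt k ε i) (pt k ε j) (pt k (-ε) m) := by
  have h := orient_cross (k := k) hε i j m
  have h1 := gap_pos (m := m) hk hi hj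
  have h2 : (i : ℝ) < j := by exact_mod_cast hij
  nlinarith

lemma cross₁_pos (hε : IsSign ε) (hk : 0 < k) {i m : ℕ} (j : ℕ) (hi : i < k) (hm : m < k) :
    0 < ε * orient (pt k ε i) (pt k (-ε) j) (pt k ε m) ↔ i < m := by
  rw [orient_cross₁ hε, mul_pos_iff_of_pos_right (gap_pos hk hm hi), sub_pos, Nat.cast_lt]

lemma cross₁_neg (hε : IsSign ε) (hk : 0 < k) {i m : ℕ} (j : ℕ) (hi : i < k) (hm : m < k) :
    0 < -ε * orient (pt k ε i) (pt k (-ε) j) (pt k ε m) ↔ m < i := by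
  rw [neg_mul, orient_cross₁ hε, ← neg_mul, mul_pos_iff_of_pos_right (gap_pos hk hm hi), neg_sub,
    sub_pos, Nat.cast_lt]

lemma cross₂_pos (hε : IsSign ε) (hk : 0 < k) {j m : ℕ} (i : ℕ) (hj : j < k) (hm : m < k) :
    0 < ε * orient (pt k ε i) (pt k (-ε) j) (pt k (-ε) m) ↔ j < m := by
  rw [orient_cross₂ hε, mul_pos_iff_of_pos_right (gap_pos hk hj hm), sub_pos, Nat.cast_lt]

lemma cross₂_neg (hε : IsSign ε) (hk : 0 < k) {j m : ℕ} (i : ℕ) (hj : j < k) (hm : m < k) :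
    0 < -ε * orient (pt k ε i) (pt k (-ε) j) (pt k (-ε) m) ↔ m < j := by
  rw [neg_mul, orient_cross₂ hε, ← neg_mul, mul_pos_iff_of_pos_right (gap_pos hk hj hm), neg_sub,
    sub_pos, Nat.cast_lt]

lemma same_pos (hε : IsSign ε) {i j m : ℕ} (hij : i < j) :
    0 < ε * orient (pt k ε i) (pt k ε j) (pt k ε m) ↔ m < i ∨ j < m := by
  rw [orient_same hε]
  have h : (i : ℝ) < j := by exact_mod_cast hij
  rw [mul_assoc, mul_pos_iff_of_pos_left (by linarith), mul_pos_iff, ← Nat.cast_lt (α := ℝ) (m := m),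
    ← Nat.cast_lt (α := ℝ) (m := j)]
  constructor
  · rintro (⟨h1, h2⟩ | ⟨h1, h2⟩)
    · right; linarith
    · left; linarith
  · rintro (h1 | h1)
    · right; constructor <;> linarith
    · left; constructor <;> linarith

lemma same_neg (hε : IsSign ε) {i j m : ℕ} (hij : i < j) :
    0 < -ε * orient (pt k ε i) (pt k ε j) (pt k ε m) ↔ i < m ∧ m < j := by
  rw [neg_mul, orient_same hε]
  have h : (i : ℝ) < j := by exact_mod_cast hij
  rw [mul_assoc, ← mul_neg, mul_pos_iff_of_pos_left (by linarith), neg_pos, mul_neg_iff,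
    ← Nat.cast_lt (α := ℝ) (m := i), ← Nat.cast_lt (α := ℝ) (m := m)]
  constructor
  · rintro (⟨h1, h2⟩ | ⟨h1, h2⟩)
    · constructor <;> linarith
    · exfalso; linarith
  · rintro ⟨h1, h2⟩
    left; constructor <;> linarith

lemma orient_ne_zero_of_pos {σ : ℝ} {a b c : Plane} (h : 0 < σ * orient a b c) :
    orient a b c ≠ 0 := by
  intro h0; simp [h0] at h

lemma same_ne_zero (hε : IsSign ε) {i j m : ℕ} (h1 : i ≠ j) (h2 : i ≠ m) (h3 : j ≠ m) :
    orient (pt k ε i) (pt k ε j) (pt k ε m) ≠ 0 := by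
  intro h
  have := orient_same (k := k) hε i j m
  rw [h, mul_zero, eq_comm] at this
  simp only [mul_eq_zero, sub_eq_zero, Nat.cast_inj] at this
  omega

lemma cross_ne_zero (hε : IsSign ε) (hk : 0 < k) {i j m : ℕ} (hi : i < k) (hj : j < k)
    (hij : i ≠ j) : orient (pt k ε i) (pt k ε j) (pt k (-ε) m) ≠ 0 := by
  intro h
  have := orient_cross (k := k) hε i j m
  rw [h, mul_zero, eq_comm] at this
  have h1 := gap_pos (m := m) hk hi hj
  simp only [mul_eq_zero, sub_eq_zero, Nat.cast_inj, h1.ne', or_false] at this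
  exact hij this

lemma dchain_orient_ne (hk : 0 < k) {x y z : Plane} (hx : x ∈ dchain k) (hy : y ∈ dchain k)
    (hz : z ∈ dchain k) (hxy : x ≠ y) (hyz : y ≠ z) (hxz : x ≠ z) : orient x y z ≠ 0 := by
  obtain ⟨ε, hε, i, hi, rfl⟩ : ∃ ε, IsSign ε ∧ ∃ i < k, x = pt k ε i := by
    rcases (mem_dchain IsSign.one).1 hx with h | h
    exacts [⟨_, IsSign.one, h⟩, ⟨_, IsSign.one.neg, h⟩]
  rcases (mem_dchain hε).1 hy with ⟨j, hj, rfl⟩ | ⟨j, hj, rfl⟩ <;>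
    rcases (mem_dchain hε).1 hz with ⟨m, hm, rfl⟩ | ⟨m, hm, rfl⟩ <;>
    simp only [ne_eq, pt_inj] at hxy hyz hxz
  · exact same_ne_zero hε hxy hxz hyz
  · exact cross_ne_zero hε hk hi hj hxy
  · rw [orient_rotate (pt k ε m)]
    exact cross_ne_zero hε hk hm hi (Ne.symm hxz)
  · rw [← orient_rotate]
    have := cross_ne_zero (m := i) hε.neg hk hj hm hyz
    rwa [neg_neg] at this

lemma dchain_generalPosition (hk : 0 < k) : InGeneralPosition (dchain k) := by
  intro x hx y hy z hz hxy hyz hxz h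
  exact dchain_orient_ne hk hx hy hz hxy hyz hxz ((orient_eq_zero_iff_collinear hxy).2 h)

lemma dchain_affineSpan (hk : 2 ≤ k) : affineSpan ℝ (dchain k : Set Plane) = ⊤ := by
  obtain ⟨s, hs, h3⟩ := Finset.exists_subset_card_eq (s := dchain k) (n := 3)
    (by rw [card_dchain (by omega)]; omega)
  rw [eq_top_iff, ← (dchain_generalPosition (by omega)).affineSpan_eq_top hs h3]
  exact affineSpan_mono ℝ (Finset.coe_subset.2 hs)

/-- A version of `mem_triangle` for triangles of either orientation. -/
lemma mem_triangle_of_sign {p a b c : Plane} (σ : ℝ) (h1 : 0 ≤ σ * orient p a b)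
    (h2 : 0 ≤ σ * orient p b c) (h3 : 0 ≤ σ * orient p c a) (h : 0 < σ * orient a b c) :
    p ∈ convexHull ℝ ({a, b, c} : Set Plane) := by
  rcases lt_trichotomy σ 0 with hσ | rfl | hσ
  · rw [Set.insert_comm]
    have e1 := orient_rotate p b a
    have e2 := orient_rotate p a c
    have e3 := orient_rotate p c b
    have f1 := orient_rotate p a b
    have f2 := orient_rotate p b c
    have f3 := orient_rotate p c a
    have g1 := orient_swap a b p
    have g2 := orient_swap b c p
    have g3 := orient_swap c a p
    have g := orient_swap a b c
    refine mem_triangle ?_ ?_ ?_ ?_ <;> nlinarith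
  · simp at h
  · exact mem_triangle (nonneg_of_mul_nonneg_right h1 hσ) (nonneg_of_mul_nonneg_right h2 hσ)
      (nonneg_of_mul_nonneg_right h3 hσ) ((mul_pos_iff_of_pos_left hσ).1 h)

variable {T : SimplicialComplex ℝ Plane}

/-- The side on a chain of a triangle with its apex on the other chain joins consecutive points,
since the next point of the chain lies in the triangle. -/
lemma IsTriangulation.step_eq (hT : IsTriangulation (dchain k) T) (hk : 0 < k) (hε : IsSign ε)
    {i m j : ℕ} (him : i < m) (hf : {pt k ε i, pt k ε m, pt k (-ε) j} ∈ T.faces) : m = i + 1 := by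
  by_contra hne
  have hs := hT.face_subset hf
  have hi : i < k := (pt_mem hε hk).1 (hs (by simp))
  have hm : m < k := (pt_mem hε hk).1 (hs (by simp))
  have hv : pt k ε (i + 1) ∈ T.vertices := by
    rw [hT.2.2]; exact (pt_mem hε hk).2 (by omega)
  have hmem : pt k ε (i + 1) ∈ convexHull ℝ
      (({pt k ε i, pt k ε m, pt k (-ε) j} : Finset Plane) : Set Plane) := by
    push_cast
    refine mem_triangle_of_sign (-ε) ?_ ?_ ?_ (cross_pos hε hk j hi hm him)
    · rw [← orient_rotate, orient_rotate (pt k ε (i + 1)), ← orient_rotate (pt k ε (i + 1))]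
      exact ((same_neg hε him).2 ⟨by omega, by omega⟩).le
    · exact (cross_pos hε hk j (by omega) hm (by omega)).le
    · rw [← orient_rotate, ← orient_rotate]
      exact (cross_pos hε hk j hi (by omega) (by omega)).le
  rw [SimplicialComplex.vertex_mem_convexHull_iff hv hf] at hmem
  simp only [Finset.mem_insert, Finset.mem_singleton, pt_inj] at hmem
  rcases hmem with h | h | h
  · omega
  · omega
  · exact pt_ne hε hk _ _ h

end DoubleChain

/-! ### From a triangulation to two polygon triangulations and a lattice path -/

section Encoding

open scoped Classical

variable {k : ℕ} {ε : ℝ} {T T' : SimplicialComplex ℝ Plane}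

/-- The triangle of a double chain that corresponds to a triangle of a polygon. -/
noncomputable def chainTri (k : ℕ) (ε : ℝ) (t : ℕ × ℕ × ℕ) : Finset Plane :=
  {pt k ε t.1, pt k ε t.2.1, pt k ε t.2.2}

/-- The triangle between the two chains that corresponds to a lattice step: from the segment between
the upper point `x` and the lower point `y`, one of the two ends advances. -/
noncomputable def stepTri (k : ℕ) (τ : Bool × ℕ × ℕ) : Finset Plane :=
  {pt k 1 τ.2.1, pt k (-1) τ.2.2, if τ.1 then pt k 1 (τ.2.1 + 1) else pt k (-1) (τ.2.2 + 1)}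

/-- The triangles of `T` with all vertices on the chain `ε`. -/
noncomputable def chains (k : ℕ) (ε : ℝ) (T : SimplicialComplex ℝ Plane) : Finset (ℕ × ℕ × ℕ) :=
  (Finset.range k ×ˢ Finset.range k ×ˢ Finset.range k).filter
    fun t => t.1 < t.2.1 ∧ t.2.1 < t.2.2 ∧ chainTri k ε t ∈ T.faces

/-- The triangles of `T` between the two chains. -/
noncomputable def steps (k : ℕ) (T : SimplicialComplex ℝ Plane) : Finset (Bool × ℕ × ℕ) :=
  (Finset.univ ×ˢ Finset.range k ×ˢ Finset.range k).filter fun τ => stepTri k τ ∈ T.faces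

lemma mem_chains (hT : IsTriangulation (dchain k) T) (hk : 0 < k) (hε : IsSign ε) {a b c : ℕ} :
    (a, b, c) ∈ chains k ε T ↔ a < b ∧ b < c ∧ {pt k ε a, pt k ε b, pt k ε c} ∈ T.faces := by
  rw [chains, Finset.mem_filter, chainTri, Finset.mem_product, Finset.mem_product,
    Finset.mem_range, Finset.mem_range, Finset.mem_range, and_iff_right_iff_imp]
  rintro ⟨-, -, hf⟩
  have hs := hT.face_subset hf
  exact ⟨(pt_mem hε hk).1 (hs (by simp)), (pt_mem hε hk).1 (hs (by simp)),
    (pt_mem hε hk).1 (hs (by simp))⟩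

lemma mem_steps (hT : IsTriangulation (dchain k) T) (hk : 0 < k) {τ : Bool × ℕ × ℕ} :
    τ ∈ steps k T ↔ stepTri k τ ∈ T.faces := by
  simp only [steps, Finset.mem_filter, Finset.mem_product, Finset.mem_range, Finset.mem_univ,
    true_and, and_iff_right_iff_imp]
  intro hf
  have hs := hT.face_subset hf
  exact ⟨(pt_mem IsSign.one hk).1 (hs (by simp [stepTri])),
    (pt_mem IsSign.one.neg hk).1 (hs (by simp [stepTri]))⟩

lemma steps_lt (hT : IsTriangulation (dchain k) T) (hk : 0 < k) {d : Bool} {x y : ℕ}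
    (h : (d, x, y) ∈ steps k T) :
    x < k ∧ y < k ∧ (d = true → x + 1 < k) ∧ (d = false → y + 1 < k) := by
  have hf := (mem_steps hT hk).1 h
  have hs := hT.face_subset hf
  refine ⟨(pt_mem IsSign.one hk).1 (hs (by simp [stepTri])),
    (pt_mem IsSign.one.neg hk).1 (hs (by simp [stepTri])), ?_, ?_⟩
  · rintro rfl
    exact (pt_mem IsSign.one hk).1 (hs (by simp [stepTri]))
  · rintro rfl
    exact (pt_mem IsSign.one.neg hk).1 (hs (by simp [stepTri]))

lemma IsTriangulation.edge_left {a b c : Plane} (hf : {a, b, c} ∈ T.faces) : {a, b} ∈ T.faces :=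
  T.down_closed hf (by intro x; simp; tauto) (by simp)

/-- A triangle with side `a b` that lies on the side of the points of the chain in between has its
apex on the same chain, as `a` and `b` are not consecutive. -/
lemma IsTriangulation.exists_down (hT : IsTriangulation (dchain k) T) (hk : 0 < k)
    (hε : IsSign ε) {a b : ℕ} {e : Plane} (hab : a + 1 < b) (he : e ∈ dchain k)
    (hpos : 0 < -ε * orient (pt k ε a) (pt k ε b) e)
    (hf : {pt k ε a, pt k ε b, e} ∈ T.faces) : ∃ d, (a, d, b) ∈ chains k ε T := by
  rcases (mem_dchain hε).1 he with ⟨m, hm, rfl⟩ | ⟨m, hm, rfl⟩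
  · obtain ⟨h1, h2⟩ := (same_neg hε (by omega)).1 hpos
    refine ⟨m, (mem_chains hT hk hε).2 ⟨h1, h2, ?_⟩⟩
    rwa [Finset.pair_comm (pt k ε m)]
  · have := hT.step_eq hk hε (by omega) hf
    omega

/-- An edge between two points of a chain that are not consecutive bounds a triangle inside the
polygon spanned by the points of the chain in between. -/
lemma IsTriangulation.exists_below (hT : IsTriangulation (dchain k) T) (hk : 0 < k)
    (hε : IsSign ε) {a b : ℕ} (hab : a + 1 < b) (hf : {pt k ε a, pt k ε b} ∈ T.faces) :
    ∃ d, (a, d, b) ∈ chains k ε T := by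
  have hs := hT.face_subset hf
  have hb : b < k := (pt_mem hε hk).1 (hs (by simp))
  obtain ⟨e, he, hpos, hf'⟩ := hT.exists_triangle_edge hf (pt_mem_of hε hk (i := a + 1) (by omega))
    (-ε) ((same_neg hε (by omega)).2 ⟨by omega, by omega⟩)
  exact hT.exists_down hk hε hab he hpos hf'

/-- The triangles on one chain satisfy the local conditions for a polygon: the long side `0, k - 1`
of the polygon bounds a triangle as all other points are on one side of it. -/
lemma IsTriangulation.goodPoly (hT : IsTriangulation (dchain k) T) (hk : 2 ≤ k)
    (hε : IsSign ε) : GoodPoly 0 (k - 1) (chains k ε T) := by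
  have hk0 : 0 < k := by omega
  have hmem : ∀ {a b c}, (a, b, c) ∈ chains k ε T ↔ _ := fun {a b c} => mem_chains hT hk0 hε
  have hlt : ∀ {a b c}, (a, b, c) ∈ chains k ε T → c < k := by
    intro a b c h
    exact (pt_mem hε hk0).1 (hT.face_subset (hmem.1 h).2.2 (by simp))
  refine ⟨?_, ?_, ?_, ?_, ?_, ?_⟩
  · intro a b c h
    have := hlt h
    have := hmem.1 h
    omega
  · intro h
    obtain ⟨e, he, hpos, hf⟩ := hT.exists_triangle_hull
      (pt_mem_of hε hk0 (i := 0) (by omega)) (pt_mem_of hε hk0 (i := k - 1) (by omega))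
      (pt_mem_of hε hk0 (i := 1) (by omega)) (-ε)
      ((same_neg hε (by omega)).2 ⟨by omega, by omega⟩) (by
        intro e he h1 h2
        rcases (mem_dchain hε).1 he with ⟨m, hm, rfl⟩ | ⟨m, hm, rfl⟩
        · rw [ne_eq, pt_inj] at h1 h2
          exact (same_neg hε (by omega)).2 ⟨by omega, by omega⟩
        · exact cross_pos hε hk0 m (by omega) (by omega) (by omega))
    exact hT.exists_down hk0 hε (by omega) he hpos hf
  · intro a b b' c h h'
    obtain ⟨h1, h2, h3⟩ := hmem.1 h
    obtain ⟨h1', h2', h3'⟩ := hmem.1 h'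
    rw [Finset.pair_comm] at h3 h3'
    exact pt_inj.1 (triangle_side_unique h3 h3' (-ε) ((same_neg hε (by omega)).2 ⟨h1, h2⟩)
      ((same_neg hε (by omega)).2 ⟨h1', h2'⟩))
  · intro a b c h hne
    have hc := hlt h
    obtain ⟨h1, h2, h3⟩ := hmem.1 h
    rw [Finset.pair_comm] at h3
    obtain ⟨d, hd, hda⟩ : ∃ d < k, d < a ∨ c < d := by
      by_cases ha : a = 0
      · exact ⟨k - 1, by omega, by omega⟩
      · exact ⟨0, by omega, by omega⟩
    obtain ⟨e, he, hpos, hf⟩ := hT.exists_triangle_edge (IsTriangulation.edge_left h3)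
      ((pt_mem hε hk0).2 hd) ε ((same_pos hε (by omega)).2 hda)
    rcases (mem_dchain hε).1 he with ⟨m, hm, rfl⟩ | ⟨m, hm, rfl⟩
    · rcases (same_pos hε (by omega)).1 hpos with hlt' | hlt'
      · refine Or.inr ⟨m, hmem.2 ⟨hlt', by omega, ?_⟩⟩
        rwa [Finset.insert_comm, Finset.pair_comm]
      · exact Or.inl ⟨m, hmem.2 ⟨by omega, hlt', hf⟩⟩
    · have := cross_pos hε hk0 m (by omega) hc (h1.trans h2)
      linarith
  · intro a b c h hlt'
    exact hT.exists_below hk0 hε hlt' (IsTriangulation.edge_left (hmem.1 h).2.2)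
  · intro a b c h hlt'
    refine hT.exists_below hk0 hε hlt' (IsTriangulation.edge_left (c := pt k ε a) ?_)
    have := (hmem.1 h).2.2
    rwa [Finset.insert_comm, Finset.pair_comm (pt k ε a)] at this

/-- A triangle to the right of an edge between the chains is a lattice step. -/
lemma IsTriangulation.exists_step_of_pos (hT : IsTriangulation (dchain k) T) (hk : 0 < k)
    {x y : ℕ} {e : Plane} (he : e ∈ dchain k)
    (hpos : 0 < 1 * orient (pt k 1 x) (pt k (-1) y) e)
    (hf : {pt k 1 x, pt k (-1) y, e} ∈ T.faces) : ∃ d, (d, x, y) ∈ steps k T := by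
  have hs := hT.face_subset hf
  have hx : x < k := (pt_mem IsSign.one hk).1 (hs (by simp))
  have hy : y < k := (pt_mem IsSign.one.neg hk).1 (hs (by simp))
  rcases (mem_dchain IsSign.one).1 he with ⟨m, hm, rfl⟩ | ⟨m, hm, rfl⟩
  · have hlt := (cross₁_pos IsSign.one hk y hx hm).1 hpos
    obtain rfl := hT.step_eq hk IsSign.one hlt (j := y) (by rwa [Finset.pair_comm])
    exact ⟨true, (mem_steps hT hk).2 (by simpa [stepTri] using hf)⟩
  · have hlt := (cross₂_pos IsSign.one hk x hy hm).1 hpos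
    obtain rfl := hT.step_eq hk IsSign.one.neg hlt (j := x) (by
      rwa [neg_neg, Finset.pair_comm (pt k (-1) m), Finset.insert_comm])
    exact ⟨false, (mem_steps hT hk).2 (by simpa [stepTri] using hf)⟩

/-- An edge between the chains, except the last one, is followed by a lattice step. -/
lemma IsTriangulation.exists_step (hT : IsTriangulation (dchain k) T) (hk : 0 < k) {x y : ℕ}
    (hf : {pt k 1 x, pt k (-1) y} ∈ T.faces) (hne : x ≠ k - 1 ∨ y ≠ k - 1) :
    ∃ d, (d, x, y) ∈ steps k T := by
  have hs := hT.face_subset hf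
  have hx : x < k := (pt_mem IsSign.one hk).1 (hs (by simp))
  have hy : y < k := (pt_mem IsSign.one.neg hk).1 (hs (by simp))
  obtain ⟨d, hd, hpos⟩ : ∃ d ∈ dchain k, 0 < 1 * orient (pt k 1 x) (pt k (-1) y) d := by
    by_cases h : x + 1 < k
    · exact ⟨pt k 1 (x + 1), (pt_mem IsSign.one hk).2 h,
        (cross₁_pos IsSign.one hk y hx h).2 (by omega)⟩
    · have h' : y + 1 < k := by omega
      exact ⟨pt k (-1) (y + 1), (pt_mem IsSign.one.neg hk).2 h',
        (cross₂_pos IsSign.one hk x hy h').2 (by omega)⟩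
  obtain ⟨e, he, hpos, hf'⟩ := hT.exists_triangle_edge hf hd 1 hpos
  exact hT.exists_step_of_pos hk he hpos hf'

/-- An edge between the chains, except the first one, is preceded by a lattice step. -/
lemma IsTriangulation.exists_step_back (hT : IsTriangulation (dchain k) T) (hk : 0 < k)
    {x y : ℕ} (hf : {pt k 1 x, pt k (-1) y} ∈ T.faces) (hne : x ≠ 0 ∨ y ≠ 0) :
    (∃ x', x = x' + 1 ∧ (true, x', y) ∈ steps k T) ∨
      ∃ y', y = y' + 1 ∧ (false, x, y') ∈ steps k T := by
  have hs := hT.face_subset hf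
  have hx : x < k := (pt_mem IsSign.one hk).1 (hs (by simp))
  have hy : y < k := (pt_mem IsSign.one.neg hk).1 (hs (by simp))
  obtain ⟨d, hd, hpos⟩ : ∃ d ∈ dchain k, 0 < -1 * orient (pt k 1 x) (pt k (-1) y) d := by
    by_cases h : x = 0
    · exact ⟨pt k (-1) 0, (pt_mem IsSign.one.neg hk).2 hk,
        (cross₂_neg IsSign.one hk x hy hk).2 (by omega)⟩
    · exact ⟨pt k 1 0, (pt_mem IsSign.one hk).2 hk,
        (cross₁_neg IsSign.one hk y hx hk).2 (by omega)⟩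
  obtain ⟨e, he, hpos, hf'⟩ := hT.exists_triangle_edge hf hd (-1) hpos
  rcases (mem_dchain IsSign.one).1 he with ⟨m, hm, rfl⟩ | ⟨m, hm, rfl⟩
  · have hlt := (cross₁_neg IsSign.one hk y hx hm).1 hpos
    obtain rfl := hT.step_eq hk IsSign.one hlt (j := y) (by
      convert hf' using 1
      ext; simp; tauto)
    refine Or.inl ⟨m, rfl, (mem_steps hT hk).2 ?_⟩
    convert hf' using 1
    ext; simp [stepTri]; tauto
  · have hlt := (cross₂_neg IsSign.one hk x hy hm).1 hpos
    obtain rfl := hT.step_eq hk IsSign.one.neg hlt (j := x) (by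
      rw [neg_neg]
      convert hf' using 1
      ext; simp; tauto)
    refine Or.inr ⟨m, rfl, (mem_steps hT hk).2 ?_⟩
    convert hf' using 1
    ext; simp [stepTri]; tauto

lemma IsTriangulation.step_edge (hT : IsTriangulation (dchain k) T) (hk : 0 < k) {d : Bool}
    {x y : ℕ} (h : (d, x, y) ∈ steps k T) : {pt k 1 x, pt k (-1) y} ∈ T.faces := by
  have := (mem_steps hT hk).1 h
  rw [stepTri] at this
  exact IsTriangulation.edge_left this

/-- The triangles between the chains satisfy the local conditions for a lattice path: each edge
between the chains bounds at most one triangle on either side. -/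
lemma IsTriangulation.goodPath (hT : IsTriangulation (dchain k) T) (hk : 2 ≤ k) :
    GoodPath (k - 1) (k - 1) 0 0 (steps k T) := by
  have hk0 : 0 < k := by omega
  refine ⟨?_, ?_, ?_, ?_, ?_, ?_⟩
  · intro d x y h
    have := steps_lt hT hk0 h
    refine ⟨by omega, by omega, by omega, by omega, ?_, ?_⟩ <;> intro hd <;> simp [hd] at this <;>
      omega
  · intro _
    obtain ⟨e, he, hpos, hf⟩ := hT.exists_triangle_hull
      ((pt_mem IsSign.one hk0).2 hk0) ((pt_mem IsSign.one.neg hk0).2 hk0)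
      (pt_mem_of IsSign.one hk0 (i := 1) (by omega)) 1
      ((cross₁_pos IsSign.one hk0 0 hk0 (by omega)).2 (by omega)) (by
        intro e he h1 h2
        rcases (mem_dchain IsSign.one).1 he with ⟨m, hm, rfl⟩ | ⟨m, hm, rfl⟩
        · rw [ne_eq, pt_inj] at h1
          exact (cross₁_pos IsSign.one hk0 0 hk0 hm).2 (by omega)
        · rw [ne_eq, pt_inj] at h2
          exact (cross₂_pos IsSign.one hk0 0 hk0 hm).2 (by omega))
    exact hT.exists_step_of_pos hk0 he hpos hf
  · intro x y h h'
    have hx := steps_lt hT hk0 h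
    have hy := steps_lt hT hk0 h'
    simp at hx hy
    refine pt_ne IsSign.one hk0 _ _ (triangle_side_unique ((mem_steps hT hk0).1 h)
      ((mem_steps hT hk0).1 h') 1 ?_ ?_)
    · exact (cross₁_pos IsSign.one hk0 y hx.1 hx.2.2).2 (by omega)
    · exact (cross₂_pos IsSign.one hk0 x hx.2.1 hy.2.2).2 (by omega)
  · intro x y h hne
    refine hT.exists_step hk0 (T.down_closed ((mem_steps hT hk0).1 h) ?_ (by simp)) hne
    intro z; simp [stepTri]; tauto
  · intro x y h hne
    refine hT.exists_step hk0 (T.down_closed ((mem_steps hT hk0).1 h) ?_ (by simp)) hne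
    intro z; simp [stepTri]; tauto
  · intro d x y h hne
    exact hT.exists_step_back hk0 (hT.step_edge hk0 h) hne

lemma IsTriangulation.exists_chain_eq (hT : IsTriangulation (dchain k) T) (hk : 0 < k)
    (hε : IsSign ε) {i j m : ℕ} (hij : i ≠ j) (hjm : j ≠ m) (him : i ≠ m)
    (hf : {pt k ε i, pt k ε j, pt k ε m} ∈ T.faces) :
    ∃ t ∈ chains k ε T, {pt k ε i, pt k ε j, pt k ε m} = chainTri k ε t := by
  have key : ∀ a b c, a < b → b < c →
      ({pt k ε i, pt k ε j, pt k ε m} : Finset Plane) = {pt k ε a, pt k ε b, pt k ε c} →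
      ∃ t ∈ chains k ε T, {pt k ε i, pt k ε j, pt k ε m} = chainTri k ε t :=
    fun a b c hab hbc h => ⟨(a, b, c), (mem_chains hT hk hε).2 ⟨hab, hbc, h ▸ hf⟩, h⟩
  rcases lt_or_gt_of_ne hij with h1 | h1 <;> rcases lt_or_gt_of_ne hjm with h2 | h2 <;>
    rcases lt_or_gt_of_ne him with h3 | h3 <;> first
    | omega
    | exact key i j m (by omega) (by omega) (by ext; simp)
    | exact key i m j (by omega) (by omega) (by ext; simp; tauto)
    | exact key j i m (by omega) (by omega) (by ext; simp; tauto)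
    | exact key j m i (by omega) (by omega) (by ext; simp; tauto)
    | exact key m i j (by omega) (by omega) (by ext; simp; tauto)
    | exact key m j i (by omega) (by omega) (by ext; simp; tauto)

lemma IsTriangulation.exists_step_eq (hT : IsTriangulation (dchain k) T) (hk : 0 < k)
    (hε : IsSign ε) {i m j : ℕ} (him : i ≠ m)
    (hf : {pt k ε i, pt k ε m, pt k (-ε) j} ∈ T.faces) :
    ∃ τ ∈ steps k T, {pt k ε i, pt k ε m, pt k (-ε) j} = stepTri k τ := by
  wlog hlt : i < m generalizing i m with H
  · obtain ⟨τ, hτ, h⟩ := H him.symm (by rwa [Finset.insert_comm]) (by omega)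
    exact ⟨τ, hτ, by rw [← h, Finset.insert_comm]⟩
  obtain rfl := hT.step_eq hk hε hlt hf
  rcases hε with rfl | rfl
  · have : ({pt k 1 i, pt k 1 (i + 1), pt k (-1) j} : Finset Plane) = stepTri k (true, i, j) := by
      ext; simp [stepTri]; tauto
    exact ⟨(true, i, j), (mem_steps hT hk).2 (this ▸ hf), this⟩
  · rw [neg_neg] at hf ⊢
    have : ({pt k (-1) i, pt k (-1) (i + 1), pt k 1 j} : Finset Plane) =
        stepTri k (false, j, i) := by
      ext; simp [stepTri]; tauto
    exact ⟨(false, j, i), (mem_steps hT hk).2 (this ▸ hf), this⟩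

/-- Every triangle of a triangulation lies on one chain or is a lattice step. -/
lemma IsTriangulation.face_cases (hT : IsTriangulation (dchain k) T) (hk : 0 < k)
    {s : Finset Plane} (hs : s ∈ T.faces) (h3 : s.card = 3) :
    (∃ t ∈ chains k 1 T, s = chainTri k 1 t) ∨ (∃ t ∈ chains k (-1) T, s = chainTri k (-1) t) ∨
      ∃ τ ∈ steps k T, s = stepTri k τ := by
  obtain ⟨x, y, z, hxy, hxz, hyz, rfl⟩ := Finset.card_eq_three.1 h3
  have hsub := hT.face_subset hs
  have hx := hsub (show x ∈ _ by simp)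
  have hy := hsub (show y ∈ _ by simp)
  have hz := hsub (show z ∈ _ by simp)
  obtain ⟨ε, hε, i, hi, rfl⟩ : ∃ ε, IsSign ε ∧ ∃ i < k, x = pt k ε i := by
    rcases (mem_dchain IsSign.one).1 hx with h | h
    exacts [⟨_, IsSign.one, h⟩, ⟨_, IsSign.one.neg, h⟩]
  have hn := hε.neg
  rcases (mem_dchain hε).1 hy with ⟨j, hj, rfl⟩ | ⟨j, hj, rfl⟩ <;>
    rcases (mem_dchain hε).1 hz with ⟨m, hm, rfl⟩ | ⟨m, hm, rfl⟩ <;>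
    simp only [ne_eq, pt_inj] at hxy hyz hxz
  · have := hT.exists_chain_eq hk hε hxy hyz hxz hs
    rcases hε with rfl | rfl
    · exact Or.inl this
    · exact Or.inr (Or.inl this)
  · exact Or.inr (Or.inr (hT.exists_step_eq hk hε hxy hs))
  · rw [Finset.pair_comm] at hs ⊢
    exact Or.inr (Or.inr (hT.exists_step_eq hk hε hxz hs))
  · rw [Finset.insert_comm, Finset.pair_comm] at hs ⊢
    have := hT.exists_step_eq hk hn (i := j) (m := m) (j := i) hyz (by rwa [neg_neg])
    rw [neg_neg] at this
    exact Or.inr (Or.inr this)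

lemma faces_subset_of_encoding (hT : IsTriangulation (dchain k) T)
    (hT' : IsTriangulation (dchain k) T') (hk : 2 ≤ k) (h1 : chains k 1 T = chains k 1 T')
    (h2 : chains k (-1) T = chains k (-1) T') (h3 : steps k T = steps k T') :
    T.faces ⊆ T'.faces := by
  have hk0 : 0 < k := by omega
  intro s hs
  obtain ⟨t, ht, ht3, hst⟩ := hT.exists_triangle_superset (dchain_generalPosition hk0)
    (by rw [card_dchain hk0]; omega) hs
  refine T'.down_closed (t := s) (s := t) ?_ hst (T.nonempty_of_mem_faces hs)
  rcases hT.face_cases hk0 ht ht3 with ⟨a, ha, rfl⟩ | ⟨a, ha, rfl⟩ | ⟨a, ha, rfl⟩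
  · rw [h1] at ha
    exact ((mem_chains hT' hk0 IsSign.one).1 ha).2.2
  · rw [h2] at ha
    exact ((mem_chains hT' hk0 IsSign.one.neg).1 ha).2.2
  · rw [h3] at ha
    exact (mem_steps hT' hk0).1 ha

/-- A triangulation of the double chain is determined by its triangles in the polygons spanned by
the two chains and its triangles between the chains. -/
lemma eq_of_encoding (hT : IsTriangulation (dchain k) T)
    (hT' : IsTriangulation (dchain k) T') (hk : 2 ≤ k) (h1 : chains k 1 T = chains k 1 T')
    (h2 : chains k (-1) T = chains k (-1) T') (h3 : steps k T = steps k T') : T = T' := by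
  refine SimplicialComplex.ext ?_
  exact Set.Subset.antisymm (faces_subset_of_encoding hT hT' hk h1 h2 h3)
    (faces_subset_of_encoding hT' hT hk h1.symm h2.symm h3.symm)

end Encoding

/-! ### Sums over polygon triangulations and lattice paths -/

section Sums

/-- If `f` is the boundary of triangles in terms of `g`, its sum over a triangulated polygon is the
sum of `g` along the boundary of the polygon. -/
lemma polyTri_sum {k : ℕ} (f : ℕ × ℕ × ℕ → ℤ) (g : ℕ → ℕ → ℤ)
    (hfg : ∀ a b c, a < b → b < c → c < k → f (a, b, c) = g a b + g b c - g a c)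
    {n i : ℕ} (hn : i + n + 1 < k) {S : Finset (ℕ × ℕ × ℕ)} (hS : S ∈ polyTri n i) :
    ∑ t ∈ S, f t = ∑ x ∈ Finset.Ico i (i + n + 1), g x (x + 1) - g i (i + n + 1) := by
  induction n using Nat.strong_induction_on generalizing i S with
  | _ n ih =>
    cases n with
    | zero => simp [polyTri] at hS; simp [hS]
    | succ n =>
      obtain ⟨m, hm, X, hX, Y, hY, rfl⟩ := mem_polyTri_succ.1 hS
      have rX := polyTri_range hX
      have rY := polyTri_range hY
      have hd : Disjoint X Y := by
        rw [Finset.disjoint_left]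
        rintro ⟨a, b, c⟩ h1 h2
        have := rX _ _ _ h1
        have := rY _ _ _ h2
        omega
      have hnot : (i, i + m + 1, i + n + 2) ∉ X ∪ Y := by
        rw [Finset.mem_union]
        rintro (h | h)
        · have := rX _ _ _ h; omega
        · have := rY _ _ _ h; omega
      rw [Finset.sum_insert hnot, Finset.sum_union hd, ih m (by omega) (by omega) hX,
        ih (n - m) (by omega) (by omega) hY, hfg _ _ _ (by omega) (by omega) (by omega),
        ← Finset.sum_Ico_consecutive _ (show i ≤ i + m + 1 by omega)
          (show i + m + 1 ≤ i + (n + 1) + 1 by omega),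
        show i + m + 1 + (n - m) + 1 = i + n + 2 by omega,
        show i + (n + 1) + 1 = i + n + 2 by omega]
      ring

/-- The analogue of `polyTri_sum` for the triangles between the chains: `c x y` is the contribution
of the segment from the upper point `x` to the lower point `y`. -/
lemma latticePath_sum {I J : ℕ} (f : Bool × ℕ × ℕ → ℤ) (c : ℕ → ℕ → ℤ) (gu gl : ℕ → ℤ)
    (hf₁ : ∀ x y, x < I → y ≤ J → f (true, x, y) = c x y - c (x + 1) y - gu x)
    (hf₂ : ∀ x y, x ≤ I → y < J → f (false, x, y) = c x y + gl y - c x (y + 1))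
    {n m i j : ℕ} (hI : I = i + n) (hJ : J = j + m) {Z : Finset (Bool × ℕ × ℕ)}
    (hZ : Z ∈ latticePath n m i j) :
    ∑ τ ∈ Z, f τ = c i j + ∑ y ∈ Finset.Ico j J, gl y - c I J - ∑ x ∈ Finset.Ico i I, gu x := by
  refine (latticePath_induction (P := fun i j Z => ∑ τ ∈ Z, f τ =
    c i j + ∑ y ∈ Finset.Ico j J, gl y - c I J - ∑ x ∈ Finset.Ico i I, gu x) ?_ ?_ ?_ hI hJ hZ).1
  · simp
  · intro i j Z hi hj hnot h
    rw [Finset.sum_insert hnot, h, hf₁ _ _ hi hj, Finset.sum_eq_sum_Ico_succ_bot hi]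
    ring
  · intro i j Z hi hj hnot h
    rw [Finset.sum_insert hnot, h, hf₂ _ _ hi hj, Finset.sum_eq_sum_Ico_succ_bot hj]
    ring

/-- A lattice path crosses every column and every row of its rectangle. -/
lemma latticePath_exists {I J n m i j : ℕ} (hI : I = i + n) (hJ : J = j + m)
    {Z : Finset (Bool × ℕ × ℕ)} (hZ : Z ∈ latticePath n m i j) :
    (∀ x, i ≤ x → x < I → ∃ y, (true, x, y) ∈ Z) ∧
      ∀ y, j ≤ y → y < J → ∃ x, (false, x, y) ∈ Z := by
  refine (latticePath_induction (P := fun i j Z => (∀ x, i ≤ x → x < I → ∃ y, (true, x, y) ∈ Z) ∧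
      ∀ y, j ≤ y → y < J → ∃ x, (false, x, y) ∈ Z) ?_ ?_ ?_ hI hJ hZ).1
  · exact ⟨fun x h1 h2 => by omega, fun y h1 h2 => by omega⟩
  · rintro i j Z hi hj - ⟨h1, h2⟩
    constructor
    · intro x hx hxI
      rcases hx.eq_or_lt with rfl | hx
      · exact ⟨j, by simp⟩
      · obtain ⟨y, hy⟩ := h1 x hx hxI
        exact ⟨y, Finset.mem_insert_of_mem hy⟩
    · intro y hy hyJ
      obtain ⟨x, hx⟩ := h2 y hy hyJ
      exact ⟨x, Finset.mem_insert_of_mem hx⟩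
  · rintro i j Z hi hj - ⟨h1, h2⟩
    constructor
    · intro x hx hxI
      obtain ⟨y, hy⟩ := h1 x hx hxI
      exact ⟨y, Finset.mem_insert_of_mem hy⟩
    · intro y hy hyJ
      rcases hy.eq_or_lt with rfl | hy
      · exact ⟨i, by simp⟩
      · obtain ⟨x, hx⟩ := h2 y hy hyJ
        exact ⟨x, Finset.mem_insert_of_mem hx⟩

end Sums

/-! ### From two polygon triangulations and a lattice path to a triangulation -/

section Decoding

open scoped Classical

variable {k : ℕ} {ε : ℝ} {p : Plane}

lemma ind_chainTri_upper (hk : 0 < k) (hp : IsGeneric (dchain k) p) {a b c : ℕ} (hab : a < b)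
    (hbc : b < c) (hc : c < k) : ind p (chainTri k 1 (a, b, c)) =
      wind p (pt k 1 a) (pt k 1 b) + wind p (pt k 1 b) (pt k 1 c)
        - wind p (pt k 1 a) (pt k 1 c) := by
  have h := (same_pos (k := k) IsSign.one hab (m := c)).2 (Or.inr hbc)
  rw [one_mul] at h
  rw [chainTri, ← wind_triangle hp (pt_mem_of IsSign.one hk (by omega))
    (pt_mem_of IsSign.one hk (by omega)) (pt_mem_of IsSign.one hk (by omega)) h,
    wind_swap p (pt k 1 a) (pt k 1 c)]
  ring

lemma ind_chainTri_lower (hk : 0 < k) (hp : IsGeneric (dchain k) p) {a b c : ℕ} (hab : a < b)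
    (hbc : b < c) (hc : c < k) : ind p (chainTri k (-1) (a, b, c)) =
      -wind p (pt k (-1) a) (pt k (-1) b) + -wind p (pt k (-1) b) (pt k (-1) c)
        - -wind p (pt k (-1) a) (pt k (-1) c) := by
  have h := (same_pos (k := k) IsSign.one.neg hab (m := c)).2 (Or.inr hbc)
  rw [neg_one_mul, ← orient_swap] at h
  rw [chainTri, Finset.insert_comm, ← wind_triangle hp (pt_mem_of IsSign.one.neg hk (by omega))
    (pt_mem_of IsSign.one.neg hk (by omega)) (pt_mem_of IsSign.one.neg hk (by omega)) h,
    wind_swap p (pt k (-1) a) (pt k (-1) b), wind_swap p (pt k (-1) b) (pt k (-1) c)]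
  ring

lemma ind_stepTri_true (hk : 0 < k) (hp : IsGeneric (dchain k) p) {x y : ℕ} (hx : x + 1 < k)
    (hy : y < k) : ind p (stepTri k (true, x, y)) =
      wind p (pt k 1 x) (pt k (-1) y) - wind p (pt k 1 (x + 1)) (pt k (-1) y)
        - wind p (pt k 1 x) (pt k 1 (x + 1)) := by
  have h := (cross₁_pos IsSign.one hk y (i := x) (m := x + 1) (by omega) hx).2 (by omega)
  rw [one_mul] at h
  have := wind_triangle hp (pt_mem_of IsSign.one hk (by omega))
    (pt_mem_of IsSign.one.neg hk hy) (pt_mem_of IsSign.one hk hx) h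
  rw [stepTri, if_pos rfl, ← this, wind_swap p (pt k 1 (x + 1)) (pt k (-1) y),
    wind_swap p (pt k 1 x) (pt k 1 (x + 1))]
  ring

lemma ind_stepTri_false (hk : 0 < k) (hp : IsGeneric (dchain k) p) {x y : ℕ} (hx : x < k)
    (hy : y + 1 < k) : ind p (stepTri k (false, x, y)) =
      wind p (pt k 1 x) (pt k (-1) y) + wind p (pt k (-1) y) (pt k (-1) (y + 1))
        - wind p (pt k 1 x) (pt k (-1) (y + 1)) := by
  have h := (cross₂_pos IsSign.one hk x (j := y) (m := y + 1) (by omega) hy).2 (by omega)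
  rw [one_mul] at h
  have := wind_triangle hp (pt_mem_of IsSign.one hk hx)
    (pt_mem_of IsSign.one.neg hk (by omega)) (pt_mem_of IsSign.one.neg hk hy) h
  rw [stepTri, if_neg (by simp), ← this, wind_swap p (pt k 1 x) (pt k (-1) (y + 1))]
  ring

/-- The convex hull of the double chain is the quadrilateral on its four extreme points, so the
boundary of the latter winds once around every generic point of the hull. -/
lemma wind_quadrilateral (hk : 2 ≤ k) (hp : IsGeneric (dchain k) p)
    (hmem : p ∈ convexHull ℝ (dchain k : Set Plane)) :
    wind p (pt k 1 0) (pt k (-1) 0) + wind p (pt k (-1) 0) (pt k (-1) (k - 1))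
      - wind p (pt k 1 (k - 1)) (pt k (-1) (k - 1)) - wind p (pt k 1 0) (pt k 1 (k - 1)) = 1 := by
  have hk0 : 0 < k := by omega
  have hk1 : k - 1 < k := by omega
  have hu0 := pt_mem_of IsSign.one hk0 hk0
  have hl0 := pt_mem_of IsSign.one.neg hk0 hk0
  have hu1 := pt_mem_of IsSign.one hk0 hk1
  have hl1 := pt_mem_of IsSign.one.neg hk0 hk1
  -- the quadrilateral is cut along the diagonal from the first upper to the last lower point
  have o1 := (cross₂_pos IsSign.one hk0 0 hk0 hk1).2 (by omega)
  have o2 := (cross₁_pos IsSign.one hk0 (k - 1) hk0 hk1).2 (by omega)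
  rw [one_mul] at o1 o2
  have t1 := wind_triangle hp hu0 hl0 hl1 o1
  have t2 := wind_triangle hp hu0 hl1 hu1 o2
  -- `p` is on the inner side of the four sides of the quadrilateral
  have s1 : 0 ≤ 1 * orient (pt k 1 0) (pt k (-1) 0) p := by
    refine orient_nonneg_of_mem_convexHull 1 (fun y hy => ?_) hmem
    rcases (mem_dchain IsSign.one).1 hy with ⟨m, hm, rfl⟩ | ⟨m, hm, rfl⟩
    · rcases Nat.eq_zero_or_pos m with rfl | h
      · rw [orient_self_left, mul_zero]
      · exact ((cross₁_pos IsSign.one hk0 0 hk0 hm).2 h).le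
    · rcases Nat.eq_zero_or_pos m with rfl | h
      · rw [orient_self_right, mul_zero]
      · exact ((cross₂_pos IsSign.one hk0 0 hk0 hm).2 h).le
  have s2 : 0 ≤ 1 * orient (pt k (-1) 0) (pt k (-1) (k - 1)) p := by
    refine orient_nonneg_of_mem_convexHull 1 (fun y hy => ?_) hmem
    rcases (mem_dchain IsSign.one.neg).1 hy with ⟨m, hm, rfl⟩ | ⟨m, hm, rfl⟩
    · have := orient_same (k := k) IsSign.one.neg 0 (k - 1) m
      have h1 : (m : ℝ) ≤ ((k - 1 : ℕ) : ℝ) := by exact_mod_cast (by omega : m ≤ k - 1)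
      have h2 : (0 : ℝ) ≤ m := by positivity
      push_cast at this
      nlinarith [mul_nonneg (mul_nonneg (h2.trans h1) h2) (sub_nonneg.2 h1)]
    · have := cross_pos IsSign.one.neg hk0 m hk0 hk1 (by omega)
      linarith
  have s3 : 0 ≤ -1 * orient (pt k 1 (k - 1)) (pt k (-1) (k - 1)) p := by
    refine orient_nonneg_of_mem_convexHull (-1) (fun y hy => ?_) hmem
    rcases (mem_dchain IsSign.one).1 hy with ⟨m, hm, rfl⟩ | ⟨m, hm, rfl⟩
    · rcases (show m ≤ k - 1 by omega).eq_or_lt with rfl | h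
      · rw [orient_self_left, mul_zero]
      · exact ((cross₁_neg IsSign.one hk0 (k - 1) hk1 hm).2 h).le
    · rcases (show m ≤ k - 1 by omega).eq_or_lt with rfl | h
      · rw [orient_self_right, mul_zero]
      · exact ((cross₂_neg IsSign.one hk0 (k - 1) hk1 hm).2 h).le
  have s4 : 0 ≤ -1 * orient (pt k 1 0) (pt k 1 (k - 1)) p := by
    refine orient_nonneg_of_mem_convexHull (-1) (fun y hy => ?_) hmem
    rcases (mem_dchain IsSign.one).1 hy with ⟨m, hm, rfl⟩ | ⟨m, hm, rfl⟩
    · have := orient_same (k := k) IsSign.one 0 (k - 1) m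
      have h1 : (m : ℝ) ≤ ((k - 1 : ℕ) : ℝ) := by exact_mod_cast (by omega : m ≤ k - 1)
      have h2 : (0 : ℝ) ≤ m := by positivity
      push_cast at this
      nlinarith [mul_nonneg (mul_nonneg (h2.trans h1) h2) (sub_nonneg.2 h1)]
    · exact (cross_pos IsSign.one hk0 m hk0 hk1 (by omega)).le
  have hd : orient p (pt k 1 0) (pt k (-1) (k - 1)) ≠ 0 :=
    (hp _ hu0).2 _ hl1 (pt_ne IsSign.one hk0 _ _)
  have r1 := orient_rotate p (pt k 1 0) (pt k (-1) 0)
  have r2 := orient_rotate p (pt k (-1) 0) (pt k (-1) (k - 1))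
  have r3 := orient_rotate p (pt k 1 (k - 1)) (pt k (-1) (k - 1))
  have r3' := orient_swap (pt k 1 (k - 1)) (pt k (-1) (k - 1)) p
  have r3'' := orient_rotate p (pt k (-1) (k - 1)) (pt k 1 (k - 1))
  have r4 := orient_rotate p (pt k 1 0) (pt k 1 (k - 1))
  have r4' := orient_swap (pt k 1 0) (pt k 1 (k - 1)) p
  have r4'' := orient_rotate p (pt k 1 (k - 1)) (pt k 1 0)
  have r5 := orient_rotate p (pt k 1 0) (pt k (-1) (k - 1))
  have r5' := orient_swap (pt k 1 0) (pt k (-1) (k - 1)) p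
  have r5'' := orient_rotate p (pt k (-1) (k - 1)) (pt k 1 0)
  have e1 := orient_rotate (pt k 1 0) (pt k (-1) (k - 1)) (pt k (-1) 0)
  have e2 := orient_rotate (pt k (-1) 0) (pt k 1 0) (pt k (-1) (k - 1))
  have e3 := orient_swap (pt k (-1) 0) (pt k 1 0) (pt k (-1) (k - 1))
  -- exactly one of the two halves contains `p`, depending on its side of the diagonal
  have key : ind p {pt k 1 0, pt k (-1) 0, pt k (-1) (k - 1)}
      + ind p {pt k 1 0, pt k (-1) (k - 1), pt k 1 (k - 1)} = 1 := by
    rcases lt_or_gt_of_ne hd with hneg | hpos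
    · rw [ind, if_pos, ind, if_neg]
      · rfl
      · intro hm
        have := orient_nonneg_of_mem_convexHull (a := pt k 1 0) (b := pt k (-1) (k - 1)) 1 ?_ hm
        · linarith
        · simp only [Finset.coe_insert, Finset.coe_singleton, Set.mem_insert_iff,
            Set.mem_singleton_iff, forall_eq_or_imp, forall_eq, orient_self_left,
            orient_self_right, mul_zero, le_refl, true_and]
          linarith
      · push_cast
        refine mem_triangle ?_ ?_ ?_ o1 <;> linarith
    · rw [ind, if_neg, ind, if_pos]
      · rfl
      · push_cast
        refine mem_triangle ?_ ?_ ?_ o2 <;> linarith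
      · intro hm
        have := orient_nonneg_of_mem_convexHull (a := pt k 1 0) (b := pt k (-1) (k - 1)) (-1) ?_ hm
        · linarith
        · have f1 := orient_swap (pt k 1 0) (pt k (-1) (k - 1)) (pt k (-1) 0)
          simp only [Finset.coe_insert, Finset.coe_singleton, Set.mem_insert_iff,
            Set.mem_singleton_iff, forall_eq_or_imp, forall_eq, orient_self_left,
            orient_self_right, mul_zero, le_refl, true_and, and_true]
          linarith
  have w1 := wind_swap p (pt k 1 0) (pt k (-1) (k - 1))
  have w2 := wind_swap p (pt k 1 (k - 1)) (pt k (-1) (k - 1))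
  have w3 := wind_swap p (pt k 1 0) (pt k 1 (k - 1))
  linarith

/-- The triangle with a given code: a triangle of the upper polygon, of the lower polygon, or
between the chains. -/
noncomputable def codeTri (k : ℕ) : (ℕ × ℕ × ℕ) ⊕ (ℕ × ℕ × ℕ) ⊕ (Bool × ℕ × ℕ) → Finset Plane :=
  Sum.elim (chainTri k 1) (Sum.elim (chainTri k (-1)) (stepTri k))

/-- The set of codes given by a triangulation of either polygon and a lattice path. -/
def codes (S S' : Finset (ℕ × ℕ × ℕ)) (Z : Finset (Bool × ℕ × ℕ)) :
    Finset ((ℕ × ℕ × ℕ) ⊕ (ℕ × ℕ × ℕ) ⊕ (Bool × ℕ × ℕ)) := S.disjSum (S'.disjSum Z)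

/-- The triangles cover each generic point of the hull exactly once: adding up their boundaries, the
inner edges cancel and the boundary of the quadrilateral remains. -/
lemma sum_ind_codes (hk : 2 ≤ k) (hp : IsGeneric (dchain k) p)
    (hmem : p ∈ convexHull ℝ (dchain k : Set Plane)) {S S' : Finset (ℕ × ℕ × ℕ)}
    {Z : Finset (Bool × ℕ × ℕ)} (hS : S ∈ polyTri (k - 2) 0) (hS' : S' ∈ polyTri (k - 2) 0)
    (hZ : Z ∈ latticePath (k - 1) (k - 1) 0 0) :
    ∑ τ ∈ codes S S' Z, ind p (codeTri k τ) = 1 := by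
  have hk0 : 0 < k := by omega
  have h1 := polyTri_sum (k := k) (fun t => ind p (chainTri k 1 t))
    (fun a b => wind p (pt k 1 a) (pt k 1 b))
    (fun a b c hab hbc hc => ind_chainTri_upper hk0 hp hab hbc hc) (by omega) hS
  have h2 := polyTri_sum (k := k) (fun t => ind p (chainTri k (-1) t))
    (fun a b => -wind p (pt k (-1) a) (pt k (-1) b))
    (fun a b c hab hbc hc => ind_chainTri_lower hk0 hp hab hbc hc) (by omega) hS'
  have h3 := latticePath_sum (I := k - 1) (J := k - 1) (fun τ => ind p (stepTri k τ))
    (fun x y => wind p (pt k 1 x) (pt k (-1) y))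
    (fun x => wind p (pt k 1 x) (pt k 1 (x + 1)))
    (fun y => wind p (pt k (-1) y) (pt k (-1) (y + 1)))
    (fun x y hx hy => ind_stepTri_true hk0 hp (by omega) (by omega))
    (fun x y hx hy => ind_stepTri_false hk0 hp (by omega) (by omega)) (by omega) (by omega) hZ
  have h4 := wind_quadrilateral hk hp hmem
  rw [codes, Finset.sum_disjSum, Finset.sum_disjSum]
  simp only [codeTri, Sum.elim_inl, Sum.elim_inr]
  rw [h1, h2, h3, show 0 + (k - 2) + 1 = k - 1 by omega, Finset.sum_neg_distrib]
  linarith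

lemma existsUnique_of_sum_ind {ι : Type*} {G : Finset ι} {tri : ι → Finset Plane}
    (h : ∑ τ ∈ G, ind p (tri τ) = 1) :
    ∃ τ ∈ G, p ∈ convexHull ℝ (tri τ : Set Plane) ∧
      ∀ τ' ∈ G, p ∈ convexHull ℝ (tri τ' : Set Plane) → τ' = τ := by
  simp only [ind, Finset.sum_boole] at h
  obtain ⟨τ, hτ⟩ := Finset.card_eq_one.1 (by exact_mod_cast h)
  simp only [Finset.ext_iff, Finset.mem_filter, Finset.mem_singleton] at hτ
  exact ⟨τ, ((hτ τ).2 rfl).1, ((hτ τ).2 rfl).2, fun τ' h1 h2 => (hτ τ').1 ⟨h1, h2⟩⟩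

lemma mem_chainTri (i a b c : ℕ) :
    pt k ε i ∈ chainTri k ε (a, b, c) ↔ i = a ∨ i = b ∨ i = c := by
  simp [chainTri, pt_inj]

lemma notMem_chainTri (hε : IsSign ε) (hk : 0 < k) (i : ℕ) (t : ℕ × ℕ × ℕ) :
    pt k ε i ∉ chainTri k (-ε) t := by
  simp [chainTri, pt_ne hε hk]

lemma mem_stepTri_upper (hk : 0 < k) (i : ℕ) (d : Bool) (x y : ℕ) :
    pt k 1 i ∈ stepTri k (d, x, y) ↔ i = x ∨ (d = true ∧ i = x + 1) := by
  have := pt_ne (k := k) IsSign.one hk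
  cases d <;> simp [stepTri, pt_inj, this]

lemma mem_stepTri_lower (hk : 0 < k) (j : ℕ) (d : Bool) (x y : ℕ) :
    pt k (-1) j ∈ stepTri k (d, x, y) ↔ j = y ∨ (d = false ∧ j = y + 1) := by
  have h : ∀ i j, pt k (-1) i ≠ pt k 1 j := fun i j => (pt_ne IsSign.one hk j i).symm
  cases d <;> simp [stepTri, pt_inj, h]

/-- The codes whose polygon triangles have increasing entries. -/
def IsSorted : (ℕ × ℕ × ℕ) ⊕ (ℕ × ℕ × ℕ) ⊕ (Bool × ℕ × ℕ) → Prop :=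
  Sum.elim (fun t => t.1 < t.2.1 ∧ t.2.1 < t.2.2)
    (Sum.elim (fun t => t.1 < t.2.1 ∧ t.2.1 < t.2.2) fun _ => True)

lemma chainTri_subset {a b c a' b' c' : ℕ} (h1 : a < b ∧ b < c) (h2 : a' < b' ∧ b' < c')
    (h : chainTri k ε (a, b, c) ⊆ chainTri k ε (a', b', c')) : (a, b, c) = (a', b', c') := by
  have e1 := (mem_chainTri a a' b' c').1 (h ((mem_chainTri a a b c).2 (by simp)))
  have e2 := (mem_chainTri b a' b' c').1 (h ((mem_chainTri b a b c).2 (by simp)))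
  have e3 := (mem_chainTri c a' b' c').1 (h ((mem_chainTri c a b c).2 (by simp)))
  simp only [Prod.mk.injEq]
  omega

lemma chainTri_mem (a b c : ℕ) : pt k ε a ∈ chainTri k ε (a, b, c) := by simp [chainTri]

/-- Distinct codes give distinct triangles; all triangles have three vertices, so an inclusion
between them is an equality. -/
lemma codeTri_subset (hk : 0 < k) {σ τ : (ℕ × ℕ × ℕ) ⊕ (ℕ × ℕ × ℕ) ⊕ (Bool × ℕ × ℕ)}
    (hσ : IsSorted σ) (hτ : IsSorted τ) (h : codeTri k σ ⊆ codeTri k τ) : σ = τ := by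
  have hneg : ∀ i t, pt k (-1) i ∉ chainTri k 1 t := by
    intro i t
    have := notMem_chainTri (k := k) IsSign.one.neg hk i t
    rwa [neg_neg] at this
  rcases σ with ⟨a, b, c⟩ | ⟨a, b, c⟩ | ⟨d, x, y⟩ <;>
    rcases τ with ⟨a', b', c'⟩ | ⟨a', b', c'⟩ | ⟨d', x', y'⟩ <;>
    simp only [codeTri, IsSorted, Sum.elim_inl, Sum.elim_inr] at hσ hτ h
  · rw [chainTri_subset hσ hτ h]
  · exact absurd (h (chainTri_mem a b c)) (notMem_chainTri IsSign.one hk _ _)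
  · exfalso
    have e1 := (mem_stepTri_upper hk _ _ _ _).1 (h ((mem_chainTri a a b c).2 (by simp)))
    have e2 := (mem_stepTri_upper hk _ _ _ _).1 (h ((mem_chainTri b a b c).2 (by simp)))
    have e3 := (mem_stepTri_upper hk _ _ _ _).1 (h ((mem_chainTri c a b c).2 (by simp)))
    omega
  · exact absurd (h (chainTri_mem a b c)) (hneg _ _)
  · rw [chainTri_subset hσ hτ h]
  · exfalso
    have e1 := (mem_stepTri_lower hk _ _ _ _).1 (h ((mem_chainTri a a b c).2 (by simp)))
    have e2 := (mem_stepTri_lower hk _ _ _ _).1 (h ((mem_chainTri b a b c).2 (by simp)))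
    have e3 := (mem_stepTri_lower hk _ _ _ _).1 (h ((mem_chainTri c a b c).2 (by simp)))
    omega
  · exact absurd (h ((mem_stepTri_lower hk y d x y).2 (by simp))) (hneg _ _)
  · exact absurd (h ((mem_stepTri_upper hk x d x y).2 (by simp)))
      (notMem_chainTri IsSign.one hk _ _)
  · have e1 := (mem_stepTri_upper hk _ _ _ _).1 (h ((mem_stepTri_upper hk x d x y).2 (by simp)))
    have e2 := (mem_stepTri_lower hk _ _ _ _).1 (h ((mem_stepTri_lower hk y d x y).2 (by simp)))
    cases d
    · have e3 := (mem_stepTri_lower hk _ _ _ _).1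
        (h ((mem_stepTri_lower hk (y + 1) false x y).2 (by simp)))
      cases d' <;> simp at e1 e2 e3 ⊢ <;> omega
    · have e3 := (mem_stepTri_upper hk _ _ _ _).1
        (h ((mem_stepTri_upper hk (x + 1) true x y).2 (by simp)))
      cases d' <;> simp at e1 e2 e3 ⊢ <;> omega

lemma isSorted_codes {S S' : Finset (ℕ × ℕ × ℕ)} {Z : Finset (Bool × ℕ × ℕ)}
    (hS : S ∈ polyTri (k - 2) 0) (hS' : S' ∈ polyTri (k - 2) 0) :
    ∀ τ ∈ codes S S' Z, IsSorted τ := by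
  rintro (⟨a, b, c⟩ | ⟨a, b, c⟩ | ⟨d, x, y⟩) h <;>
    simp only [codes, Finset.inl_mem_disjSum, Finset.inr_mem_disjSum] at h <;>
    simp only [IsSorted, Sum.elim_inl, Sum.elim_inr]
  · have := polyTri_range hS _ _ _ h; omega
  · have := polyTri_range hS' _ _ _ h; omega

lemma codeTri_card (hk : 0 < k) {τ : (ℕ × ℕ × ℕ) ⊕ (ℕ × ℕ × ℕ) ⊕ (Bool × ℕ × ℕ)}
    (hτ : IsSorted τ) : (codeTri k τ).card = 3 := by
  rw [Finset.card_eq_three]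
  rcases τ with ⟨a, b, c⟩ | ⟨a, b, c⟩ | ⟨d, x, y⟩ <;>
    simp only [codeTri, IsSorted, Sum.elim_inl, Sum.elim_inr] at hτ ⊢
  · refine ⟨_, _, _, ?_, ?_, ?_, rfl⟩ <;> rw [ne_eq, pt_inj] <;> dsimp only <;> omega
  · refine ⟨_, _, _, ?_, ?_, ?_, rfl⟩ <;> rw [ne_eq, pt_inj] <;> dsimp only <;> omega
  · refine ⟨_, _, _, pt_ne IsSign.one hk _ _, ?_, ?_, rfl⟩
    · cases d
      · exact pt_ne IsSign.one hk _ _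
      · simp [pt_inj]
    · cases d
      · simp [pt_inj]
      · exact (pt_ne IsSign.one hk _ _).symm

lemma codeTri_subset_dchain (hk : 2 ≤ k) {S S' : Finset (ℕ × ℕ × ℕ)}
    {Z : Finset (Bool × ℕ × ℕ)} (hS : S ∈ polyTri (k - 2) 0) (hS' : S' ∈ polyTri (k - 2) 0)
    (hZ : Z ∈ latticePath (k - 1) (k - 1) 0 0) :
    ∀ τ ∈ codes S S' Z, codeTri k τ ⊆ dchain k := by
  have hk0 : 0 < k := by omega
  have hu := fun {i} => pt_mem_of (i := i) IsSign.one hk0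
  have hl := fun {i} => pt_mem_of (i := i) IsSign.one.neg hk0
  rintro (⟨a, b, c⟩ | ⟨a, b, c⟩ | ⟨d, x, y⟩) h <;>
    simp only [codes, Finset.inl_mem_disjSum, Finset.inr_mem_disjSum] at h <;>
    simp only [codeTri, Sum.elim_inl, Sum.elim_inr, chainTri, stepTri, Finset.insert_subset_iff,
      Finset.singleton_subset_iff]
  · have := polyTri_range hS _ _ _ h
    exact ⟨hu (by omega), hu (by omega), hu (by omega)⟩
  · have := polyTri_range hS' _ _ _ h
    exact ⟨hl (by omega), hl (by omega), hl (by omega)⟩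
  · have := latticePath_range hZ _ _ _ h
    refine ⟨hu (by omega), hl (by omega), ?_⟩
    cases d <;> simp at this ⊢
    · exact hl (by omega)
    · exact hu (by omega)

/-- Every choice of two polygon triangulations and a lattice path comes from a triangulation of the
double chain. -/
lemma exists_of_codes (hk : 2 ≤ k) {S S' : Finset (ℕ × ℕ × ℕ)}
    {Z : Finset (Bool × ℕ × ℕ)} (hS : S ∈ polyTri (k - 2) 0) (hS' : S' ∈ polyTri (k - 2) 0)
    (hZ : Z ∈ latticePath (k - 1) (k - 1) 0 0) :
    ∃ T, IsTriangulation (dchain k) T ∧ chains k 1 T = S ∧ chains k (-1) T = S' ∧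
      steps k T = Z := by
  have hk0 : 0 < k := by omega
  have hsort := isSorted_codes (Z := Z) hS hS'
  have hsub := codeTri_subset_dchain hk hS hS' hZ
  have hpath := latticePath_exists (show k - 1 = 0 + (k - 1) by omega)
    (show k - 1 = 0 + (k - 1) by omega) hZ
  obtain ⟨T, hT, hfaces⟩ := (dchain_generalPosition hk0).exists_triangulation
    (by rw [card_dchain hk0]; omega) (codes S S' Z) (codeTri k)
    (fun τ hτ => codeTri_card hk0 (hsort τ hτ)) hsub
    (fun p hp hmem => by
      obtain ⟨τ, h1, h2, -⟩ := existsUnique_of_sum_ind (sum_ind_codes hk hp hmem hS hS' hZ)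
      exact ⟨τ, h1, h2⟩)
    (fun p hp τ hτ τ' hτ' h h' => by
      have hmem := convexHull_mono (Finset.coe_subset.2 (hsub τ hτ)) h
      obtain ⟨_, _, _, hu⟩ := existsUnique_of_sum_ind (sum_ind_codes hk hp hmem hS hS' hZ)
      rw [hu τ hτ h, hu τ' hτ' h'])
    (fun a ha => by
      -- every vertex is on a step, as the lattice path runs through all rows and columns
      rcases (mem_dchain IsSign.one).1 ha with ⟨i, hi, rfl⟩ | ⟨i, hi, rfl⟩
      · by_cases h : i < k - 1
        · obtain ⟨y, hy⟩ := hpath.1 i (by omega) h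
          exact ⟨Sum.inr (Sum.inr (true, i, y)), by simpa [codes] using hy,
            (mem_stepTri_upper hk0 _ _ _ _).2 (by simp)⟩
        · obtain ⟨y, hy⟩ := hpath.1 (i - 1) (by omega) (by omega)
          exact ⟨Sum.inr (Sum.inr (true, i - 1, y)), by simpa [codes] using hy,
            (mem_stepTri_upper hk0 _ _ _ _).2 (Or.inr ⟨rfl, by omega⟩)⟩
      · by_cases h : i < k - 1
        · obtain ⟨x, hx⟩ := hpath.2 i (by omega) h
          exact ⟨Sum.inr (Sum.inr (false, x, i)), by simpa [codes] using hx,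
            (mem_stepTri_lower hk0 _ _ _ _).2 (by simp)⟩
        · obtain ⟨x, hx⟩ := hpath.2 (i - 1) (by omega) (by omega)
          exact ⟨Sum.inr (Sum.inr (false, x, i - 1)), by simpa [codes] using hx,
            (mem_stepTri_lower hk0 _ _ _ _).2 (Or.inr ⟨rfl, by omega⟩)⟩)
  have key : ∀ σ, IsSorted σ → (codeTri k σ ∈ T.faces ↔ σ ∈ codes S S' Z) := by
    intro σ hσ
    rw [hfaces]
    constructor
    · rintro ⟨-, τ, hτ, h⟩
      rwa [codeTri_subset hk0 hσ (hsort τ hτ) h]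
    · intro h
      exact ⟨Finset.card_pos.1 (by rw [codeTri_card hk0 hσ]; norm_num), σ, h, subset_rfl⟩
  refine ⟨T, hT, ?_, ?_, ?_⟩
  · ext ⟨a, b, c⟩
    rw [mem_chains hT hk0 IsSign.one]
    constructor
    · rintro ⟨h1, h2, h3⟩
      have := (key (Sum.inl (a, b, c)) ⟨h1, h2⟩).1 h3
      simpa [codes] using this
    · intro h
      have hm : Sum.inl (a, b, c) ∈ codes S S' Z := by simpa [codes] using h
      have hs := hsort _ hm
      exact ⟨hs.1, hs.2, (key _ hs).2 hm⟩
  · ext ⟨a, b, c⟩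
    rw [mem_chains hT hk0 IsSign.one.neg]
    constructor
    · rintro ⟨h1, h2, h3⟩
      have := (key (Sum.inr (Sum.inl (a, b, c))) ⟨h1, h2⟩).1 h3
      simpa [codes] using this
    · intro h
      have hm : Sum.inr (Sum.inl (a, b, c)) ∈ codes S S' Z := by simpa [codes] using h
      have hs := hsort _ hm
      exact ⟨hs.1, hs.2, (key _ hs).2 hm⟩
  · ext τ
    rw [mem_steps hT hk0, show stepTri k τ = codeTri k (Sum.inr (Sum.inr τ)) from rfl,
      key (Sum.inr (Sum.inr τ)) trivial]
    simp [codes]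

/-- The triangulations of the double chain correspond to the triples of a lattice path and one
triangulation of each polygon. -/
lemma card_triangulations (hk : 2 ≤ k) :
    Nat.card {T : SimplicialComplex ℝ Plane | IsTriangulation (dchain k) T} =
      Nat.choose (2 * k - 2) (k - 1) * catalan (k - 2) ^ 2 := by
  have him : (fun T => (steps k T, chains k 1 T, chains k (-1) T)) ''
      {T : SimplicialComplex ℝ Plane | IsTriangulation (dchain k) T} =
      ↑(latticePath (k - 1) (k - 1) 0 0 ×ˢ polyTri (k - 2) 0 ×ˢ polyTri (k - 2) 0) := by
    ext ⟨Z, S, S'⟩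
    simp only [Set.mem_image, Set.mem_ofPred_eq, Prod.mk.injEq, Finset.coe_product, Set.mem_prod,
      Finset.mem_coe]
    constructor
    · rintro ⟨T, hT, rfl, rfl, rfl⟩
      exact ⟨(hT.goodPath hk).mem_latticePath (by omega) (by omega),
        (hT.goodPoly hk IsSign.one).mem_polyTri (by omega),
        (hT.goodPoly hk IsSign.one.neg).mem_polyTri (by omega)⟩
    · rintro ⟨hZ, hS, hS'⟩
      obtain ⟨T, hT, h1, h2, h3⟩ := exists_of_codes hk hS hS' hZ
      exact ⟨T, hT, h3, h1, h2⟩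
  rw [Nat.card_coe_set_eq, ← Set.InjOn.ncard_image, him, Set.ncard_coe_finset,
    Finset.card_product, Finset.card_product, card_latticePath, card_polyTri, sq,
    show k - 1 + (k - 1) = 2 * k - 2 by omega]
  intro T hT T' hT' h
  simp only [Prod.mk.injEq] at h
  exact eq_of_encoding hT hT' hk h.2.1 h.2.2 h.1

end Decoding

theorem double_chain_triangulation_count (k : ℕ) (hk : 2 ≤ k) :
    ∃ A : Finset Plane,
      InGeneralPosition A ∧
      affineSpan ℝ (A : Set Plane) = ⊤ ∧
      A.card = 2 * k ∧
      Nat.card {T : SimplicialComplex ℝ Plane | IsTriangulation A T} =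
        Nat.choose (2 * k - 2) (k - 1) * catalan (k - 2) ^ 2 :=
  ⟨dchain k, dchain_generalPosition (by omega), dchain_affineSpan hk, card_dchain (by omega),
    card_triangulations hk⟩
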